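/- arXiv:1504.02583 — 2 statements merged into one kernel-verified Lean document; each statement's English description precedes it below -/
import Mathlib

section
/- Let γ, δ ∈ (0,1) be such that γ < (δ/(2(1−γ)))·e^{−1/(1−γ)} − (δ^{3/2}/(6(1−γ)²))·e^{−7/(8(1−γ))}. Then there is an integer R so that for all r ≥ R, every simple graph G with maximum degree at most r, in which for every vertex v the neighborhood N(v) induces a subgraph with at most (1−δ)·(r choose 2) edges, satisfies χ(G) ≤ (1−γ)·r. -/
set_option linter.unusedSectionVars false

namespace CL
open Finset

section prob
variable {V α : Type} [Fintype V] [DecidableEq V] [Fintype α] [Nonempty α]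

noncomputable def E (f : (V → α) → ℝ) : ℝ := (∑ ω, f ω) / (Fintype.card (V → α) : ℝ)

noncomputable def A (x : V) (f : (V → α) → ℝ) : (V → α) → ℝ :=
  fun ω => (∑ a, f (Function.update ω x a)) / (Fintype.card α : ℝ)

noncomputable def AL (L : List V) (f : (V → α) → ℝ) : (V → α) → ℝ := L.foldr A f

lemma AL_cons (x : V) (L : List V) (f : (V → α) → ℝ) : AL (x :: L) f = A x (AL L f) := rfl

lemma cα : (0 : ℝ) < Fintype.card α := by exact_mod_cast Fintype.card_pos

lemma E_A (x : V) (f : (V → α) → ℝ) : E (A x f) = E f := by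
  unfold E A
  congr 1
  rw [← Finset.sum_div, div_eq_iff (cα (α := α)).ne']
  rw [← Finset.sum_product']
  have hinv : Function.Involutive
      (fun p : (V → α) × α => (Function.update p.1 x p.2, p.1 x)) := by
    intro p; simp
  have := Equiv.sum_comp hinv.toPerm (fun p : (V → α) × α => f p.1)
  simp only [Function.Involutive.coe_toPerm] at this
  rw [show (univ : Finset (V → α)) ×ˢ (univ : Finset α) = univ from rfl, this,
    Fintype.sum_prod_type]
  simp only [Finset.sum_const, Finset.card_univ, nsmul_eq_mul, ← Finset.mul_sum]
  exact mul_comm _ _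

lemma E_AL (L : List V) (f : (V → α) → ℝ) : E (AL L f) = E f := by
  induction L with
  | nil => rfl
  | cons x L ih => rw [AL_cons, E_A, ih]

lemma E_mono {f g : (V → α) → ℝ} (h : ∀ ω, f ω ≤ g ω) : E f ≤ E g := by
  unfold E; gcongr with ω; exact h ω

lemma E_const (c : ℝ) : E (fun _ : V → α => c) = c := by
  have : (0 : ℝ) < Fintype.card (V → α) := by exact_mod_cast Fintype.card_pos
  unfold E; rw [Finset.sum_const, Finset.card_univ, nsmul_eq_mul]; field_simp

lemma E_mul_const (f : (V → α) → ℝ) (c : ℝ) : E (fun ω => f ω * c) = E f * c := by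
  unfold E; rw [← Finset.sum_mul]; ring

lemma E_const_mul (f : (V → α) → ℝ) (c : ℝ) : E (fun ω => c * f ω) = c * E f := by
  unfold E; rw [← Finset.mul_sum]; ring

lemma E_sub (f g : (V → α) → ℝ) : E (fun ω => f ω - g ω) = E f - E g := by
  unfold E; rw [Finset.sum_sub_distrib]; ring

lemma E_sum {ι : Type} (s : Finset ι) (f : ι → (V → α) → ℝ) :
    E (fun ω => ∑ i ∈ s, f i ω) = ∑ i ∈ s, E (f i) := by
  unfold E; rw [Finset.sum_comm, Finset.sum_div]

lemma A_mono {f g : (V → α) → ℝ} (x : V) (h : ∀ ω, f ω ≤ g ω) (ω) : A x f ω ≤ A x g ω := by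
  unfold A; gcongr with a; exact h _

lemma A_dep {f : (V → α) → ℝ} {T : Set V} (x : V) (h : DependsOn f T) :
    DependsOn (A x f) (T \ {x}) := by
  intro ω ω' hω
  unfold A
  congr 1
  refine Finset.sum_congr rfl fun a _ => h fun y hy => ?_
  by_cases hyx : y = x
  · subst hyx; simp
  · simp [hyx]; exact hω y ⟨hy, hyx⟩

lemma AL_dep {f : (V → α) → ℝ} {T : Set V} (L : List V) (h : DependsOn f T) :
    DependsOn (AL L f) (T \ {x | x ∈ L}) := by
  induction L with
  | nil => simpa [AL] using h
  | cons x L ih =>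
    rw [AL_cons]
    have := A_dep x ih
    intro ω ω' hω
    refine this fun y hy => hω y ?_
    simp at hy ⊢; tauto

lemma AL_const {f : (V → α) → ℝ} {T : Set V} (L : List V) (h : DependsOn f T)
    (hT : ∀ x ∈ T, x ∈ L) (ω : V → α) : AL L f ω = E f := by
  have h1 := AL_dep L h
  have h2 : AL L f = fun _ => AL L f ω := by
    funext ω'
    refine h1 fun y hy => ?_
    exact absurd (hT y hy.1) hy.2
  rw [← E_AL L f]
  conv_rhs => rw [h2, E_const]

lemma A_pull {f g : (V → α) → ℝ} (x : V) (h : ∀ ω a, g (Function.update ω x a) = g ω) :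
    A x (fun ω => g ω * f ω) = fun ω => g ω * A x f ω := by
  funext ω
  unfold A
  simp only [h]
  rw [← Finset.mul_sum, mul_div_assoc]

lemma AL_pull {f g : (V → α) → ℝ} (L : List V)
    (h : ∀ x ∈ L, ∀ ω a, g (Function.update ω x a) = g ω) :
    AL L (fun ω => g ω * f ω) = fun ω => g ω * AL L f ω := by
  induction L with
  | nil => rfl
  | cons x L ih =>
    rw [AL_cons, ih (fun y hy => h y (List.mem_cons_of_mem _ hy)),
      A_pull x (h x List.mem_cons_self), AL_cons]

lemma E_indep {f g : (V → α) → ℝ} {T : Finset V} {T' : Set V} (hf : DependsOn f (T : Set V))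
    (hg : DependsOn g T') (hd : ∀ x ∈ T, x ∉ T') : E (fun ω => g ω * f ω) = E g * E f := by
  rw [← E_AL T.toList, AL_pull, ← E_mul_const]
  · congr 1; funext ω; congr 1
    exact AL_const _ hf (by simp) ω
  · intro x hx ω a
    refine hg fun y hy => ?_
    rw [Function.update_of_ne]
    rintro rfl
    exact hd y (by simpa using hx) hy

/-- single variable exponential moment -/
lemma mgf_one (φ c : α → ℝ) (lam s : ℝ) (h0 : 0 ≤ lam) (h1 : lam ≤ 1 / 4)
    (hc0 : ∀ a, 0 ≤ c a) (hc2 : ∀ a, c a ≤ 2)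
    (hφ : ∀ a b, |φ a - φ b| ≤ c a + c b)
    (hs : (∑ a, c a ^ 2) / (Fintype.card α : ℝ) ≤ s) :
    (∑ a, Real.exp (-lam * φ a)) / (Fintype.card α : ℝ) ≤
      Real.exp (4 * lam ^ 2 * s - lam * ((∑ a, φ a) / (Fintype.card α : ℝ))) := by
  set N : ℝ := (Fintype.card α : ℝ) with hN
  have hNpos : 0 < N := cα
  set μ := (∑ a, φ a) / N with hμ
  set cb := (∑ a, c a) / N with hcb
  have hcard : ∑ _a : α, (1 : ℝ) = N := by simp [hN]
  have hφsum : ∑ a, φ a = N * μ := by rw [hμ]; field_simp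
  have hcsum : ∑ a, c a = N * cb := by rw [hcb]; field_simp
  have hcbsq : N * cb ^ 2 ≤ ∑ a, c a ^ 2 := by
    have := Finset.sum_mul_sq_le_sq_mul_sq univ c (fun _ => (1 : ℝ))
    simp only [mul_one, one_pow, hcard, hcsum] at this
    have h2 : N * (N * cb ^ 2) ≤ N * ∑ a, c a ^ 2 := by nlinarith
    exact le_of_mul_le_mul_left h2 hNpos
  have hs' : ∑ a, c a ^ 2 ≤ N * s := by
    rw [div_le_iff₀ hNpos] at hs; linarith
  have hdev : ∀ a, |μ - φ a| ≤ c a + cb := by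
    intro a
    have h1 : N * (μ - φ a) = ∑ b, (φ b - φ a) := by
      rw [Finset.sum_sub_distrib, hφsum]; simp [hN]; ring
    have h2 : N * |μ - φ a| ≤ N * (c a + cb) := by
      rw [← abs_of_pos hNpos, ← abs_mul, abs_of_pos hNpos, h1]
      calc |∑ b, (φ b - φ a)| ≤ ∑ b, |φ b - φ a| := Finset.abs_sum_le_sum_abs _ _
        _ ≤ ∑ b, (c b + c a) := Finset.sum_le_sum fun b _ => hφ b a
        _ = N * (c a + cb) := by rw [Finset.sum_add_distrib, hcsum]; simp [hN]; ring
    exact le_of_mul_le_mul_left h2 hNpos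
  have hcb2 : cb ≤ 2 := by
    rw [hcb, div_le_iff₀ hNpos]
    calc ∑ a, c a ≤ ∑ _a : α, (2 : ℝ) := Finset.sum_le_sum fun a _ => hc2 a
      _ = 2 * N := by simp [hN]; ring
  have hcb0 : 0 ≤ cb := by
    rw [hcb]; exact div_nonneg (Finset.sum_nonneg fun a _ => hc0 a) hNpos.le
  have hexp : ∀ a, Real.exp (lam * (μ - φ a)) ≤
      1 + lam * (μ - φ a) + lam ^ 2 * (2 * c a ^ 2 + 2 * cb ^ 2) := by
    intro a
    have hd := hdev a
    have hle : |lam * (μ - φ a)| ≤ 1 := by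
      rw [abs_mul, abs_of_nonneg h0]
      have := hc2 a
      have : |μ - φ a| ≤ 4 := by linarith
      nlinarith [abs_nonneg (μ - φ a)]
    have h3 := (abs_le.mp (Real.abs_exp_sub_one_sub_id_le hle)).2
    have h4 : (μ - φ a) ^ 2 ≤ 2 * c a ^ 2 + 2 * cb ^ 2 := by
      rw [← sq_abs]
      have : |μ - φ a| ^ 2 ≤ (c a + cb) ^ 2 := by gcongr
      nlinarith [sq_nonneg (c a - cb)]
    have h5 := mul_le_mul_of_nonneg_left h4 (sq_nonneg lam)
    nlinarith
  have hsum : ∑ a, Real.exp (lam * (μ - φ a)) ≤ N * (1 + 4 * lam ^ 2 * s) := by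
    calc _ ≤ ∑ a, (1 + lam * (μ - φ a) + lam ^ 2 * (2 * c a ^ 2 + 2 * cb ^ 2)) :=
          Finset.sum_le_sum fun a _ => hexp a
      _ = N + lam ^ 2 * (2 * ∑ a, c a ^ 2 + 2 * (N * cb ^ 2)) := by
          simp only [Finset.sum_add_distrib, ← Finset.mul_sum, Finset.sum_sub_distrib, hφsum, hcard]
          simp [hN]
      _ ≤ N + lam ^ 2 * (2 * (N * s) + 2 * (N * s)) := by
          have := hcbsq.trans hs'
          gcongr
      _ = _ := by ring
  have h6 : ∑ a, Real.exp (-lam * φ a) = Real.exp (-lam * μ) * ∑ a, Real.exp (lam * (μ - φ a)) := by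
    rw [Finset.mul_sum]
    refine Finset.sum_congr rfl fun a _ => ?_
    rw [← Real.exp_add]; congr 1; ring
  rw [div_le_iff₀ hNpos, h6, sub_eq_add_neg, add_comm, Real.exp_add, mul_assoc, neg_mul]
  gcongr
  have := Real.add_one_le_exp (4 * lam ^ 2 * s)
  calc _ ≤ N * (1 + 4 * lam ^ 2 * s) := hsum
    _ ≤ N * Real.exp (4 * lam ^ 2 * s) := by gcongr; linarith
    _ = _ := by ring

lemma AL_diff (f : (V → α) → ℝ) (x : V) (c : (V → α) → α → ℝ)
    (hf : ∀ ω a b, |f (Function.update ω x a) - f (Function.update ω x b)| ≤ c ω a + c ω b)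
    (L : List V) (hx : x ∉ L)
    (hinv : ∀ y ∈ L, ∀ ω b a, c (Function.update ω y b) a = c ω a) :
    ∀ ω a b, |AL L f (Function.update ω x a) - AL L f (Function.update ω x b)| ≤ c ω a + c ω b := by
  induction L with
  | nil => exact hf
  | cons y L ih =>
    intro ω a b
    have hyx : y ≠ x := by rintro rfl; simp at hx
    have ih' := ih (by simp at hx; tauto) (fun z hz => hinv z (List.mem_cons_of_mem _ hz))
    rw [AL_cons]
    unfold A
    rw [← sub_div, ← Finset.sum_sub_distrib, abs_div, abs_of_pos (cα (α := α)),
      div_le_iff₀ (cα (α := α))]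
    calc _ ≤ ∑ d, |AL L f (Function.update (Function.update ω x a) y d) -
            AL L f (Function.update (Function.update ω x b) y d)| := Finset.abs_sum_le_sum_abs _ _
      _ ≤ ∑ _d : α, (c ω a + c ω b) := by
          refine Finset.sum_le_sum fun d _ => ?_
          rw [Function.update_comm hyx.symm, Function.update_comm hyx.symm]
          have := ih' (Function.update ω y d) a b
          rwa [hinv y List.mem_cons_self, hinv y List.mem_cons_self] at this
      _ = _ := by simp; ring

lemma AL_mgf (f : (V → α) → ℝ) (c : V → (V → α) → α → ℝ) (s : V → ℝ) (lam : ℝ)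
    (h0 : 0 ≤ lam) (h1 : lam ≤ 1 / 4)
    (hc0 : ∀ x ω a, 0 ≤ c x ω a) (hc2 : ∀ x ω a, c x ω a ≤ 2)
    (hf : ∀ x ω a b, |f (Function.update ω x a) - f (Function.update ω x b)| ≤ c x ω a + c x ω b)
    (hs : ∀ x ω, (∑ a, c x ω a ^ 2) / (Fintype.card α : ℝ) ≤ s x)
    (L : List V) (hL : L.Nodup)
    (hinv : L.Pairwise fun x y => ∀ ω b a, c x (Function.update ω y b) a = c x ω a) (ω : V → α) :
    AL L (fun ω => Real.exp (-lam * f ω)) ω ≤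
      Real.exp (4 * lam ^ 2 * (L.map s).sum - lam * AL L f ω) := by
  induction L generalizing ω with
  | nil => simp [AL]
  | cons x L ih =>
    rw [List.nodup_cons] at hL
    rw [List.pairwise_cons] at hinv
    rw [AL_cons, AL_cons]
    refine (A_mono x (ih hL.2 hinv.2) ω).trans ?_
    have key := mgf_one (fun a => AL L f (Function.update ω x a)) (c x ω) lam (s x) h0 h1
      (hc0 x ω) (hc2 x ω) (AL_diff f x (c x) (hf x) L hL.1 hinv.1 ω) (hs x ω)
    have e : A x (fun ω => Real.exp (4 * lam ^ 2 * (L.map s).sum - lam * AL L f ω)) ω =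
        Real.exp (4 * lam ^ 2 * (L.map s).sum) *
        ((∑ a, Real.exp (-lam * AL L f (Function.update ω x a))) / (Fintype.card α : ℝ)) := by
      unfold A
      rw [← mul_div_assoc, Finset.mul_sum]
      congr 1
      refine Finset.sum_congr rfl fun a _ => ?_
      rw [← Real.exp_add]; ring_nf
    rw [e]
    refine (mul_le_mul_of_nonneg_left key (Real.exp_pos _).le).trans (le_of_eq ?_)
    rw [← Real.exp_add]; congr 1
    simp only [List.map_cons, List.sum_cons, A]; ring

lemma tail (f : (V → α) → ℝ) (c : V → (V → α) → α → ℝ) (s : V → ℝ) (lam : ℝ)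
    (h0 : 0 ≤ lam) (h1 : lam ≤ 1 / 4)
    (hc0 : ∀ x ω a, 0 ≤ c x ω a) (hc2 : ∀ x ω a, c x ω a ≤ 2)
    (hf : ∀ x ω a b, |f (Function.update ω x a) - f (Function.update ω x b)| ≤ c x ω a + c x ω b)
    (hs : ∀ x ω, (∑ a, c x ω a ^ 2) / (Fintype.card α : ℝ) ≤ s x)
    (N : Finset V)
    (hin : ∀ x ∈ N, ∀ y ω b a, c x (Function.update ω y b) a = c x ω a)
    (hout : ∀ x, ∀ y ∉ N, ∀ ω b a, c x (Function.update ω y b) a = c x ω a) (T : ℝ) :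
    E (fun ω => if f ω < T then (1 : ℝ) else 0) ≤
      Real.exp (4 * lam ^ 2 * ∑ x, s x + lam * (T - E f)) := by
  have hperm : (univ : Finset V) = (N.toList ++ Nᶜ.toList).toFinset := by
    ext x; simp
  have hnd : (N.toList ++ Nᶜ.toList).Nodup := by
    rw [List.nodup_append]
    refine ⟨N.nodup_toList, Finset.nodup_toList _, ?_⟩
    intro a ha b hb
    simp at ha hb; rintro rfl; exact hb ha
  set L := N.toList ++ Nᶜ.toList with hL
  have hpw : L.Pairwise fun x y => ∀ ω b a, c x (Function.update ω y b) a = c x ω a := by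
    rw [hL, List.pairwise_append]
    refine ⟨?_, ?_, ?_⟩
    · exact List.Pairwise.imp_of_mem (R := fun _ _ => True)
        (fun {x y} hx _ _ => hin x (by simpa using hx) y) (List.pairwise_of_forall (by simp))
    · exact List.Pairwise.imp_of_mem (R := fun _ _ => True)
        (fun {x y} _ hy _ => hout x y (by simpa using hy)) (List.pairwise_of_forall (by simp))
    · intro x hx y _
      exact hin x (by simpa using hx) y
  have hmem : ∀ x : V, x ∈ L := by
    intro x
    have : x ∈ L.toFinset := by rw [← hperm]; simp
    simpa using this
  have hdep : ∀ g : (V → α) → ℝ, DependsOn g (Set.univ : Set V) := by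
    intro g ω ω' h
    congr 1; funext x; exact h x trivial
  obtain ⟨ω0⟩ : Nonempty (V → α) := inferInstance
  have key := AL_mgf f c s lam h0 h1 hc0 hc2 hf hs L hnd hpw ω0
  rw [AL_const L (hdep _) (fun x _ => hmem x), AL_const L (hdep _) (fun x _ => hmem x)] at key
  have hsum : (L.map s).sum = ∑ x, s x := by
    rw [hperm, List.sum_toFinset _ hnd]
  rw [hsum] at key
  calc _ ≤ E (fun ω => Real.exp (lam * T) * Real.exp (-lam * f ω)) := by
        refine E_mono fun ω => ?_
        rw [← Real.exp_add]
        split_ifs with h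
        · apply Real.one_le_exp; nlinarith
        · positivity
    _ = Real.exp (lam * T) * E (fun ω => Real.exp (-lam * f ω)) := E_const_mul _ _
    _ ≤ Real.exp (lam * T) * Real.exp (4 * lam ^ 2 * ∑ x, s x - lam * E f) := by gcongr
    _ = _ := by rw [← Real.exp_add]; congr 1; ring

end prob

section lll
variable {V α : Type} [Fintype V] [DecidableEq V] [Fintype α] [Nonempty α]

open Classical in
noncomputable def good (bad : V → (V → α) → Prop) (S : Finset V) (ω : V → α) : ℝ :=
  if ∀ v ∈ S, ¬ bad v ω then 1 else 0

open Classical in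
noncomputable def ib (bad : V → (V → α) → Prop) (v : V) (ω : V → α) : ℝ :=
  if bad v ω then 1 else 0

lemma good_nonneg (bad : V → (V → α) → Prop) (S : Finset V) (ω : V → α) :
    0 ≤ good bad S ω := by unfold good; split_ifs <;> simp

lemma lll_key (bad : V → (V → α) → Prop) (T : V → Finset V) (p : ℝ) (d : ℕ) (hp0 : 0 ≤ p)
    (hdep : ∀ v ω ω', (∀ x ∈ T v, ω x = ω' x) → (bad v ω ↔ bad v ω'))
    (hp : ∀ v, E (ib bad v) ≤ p)
    (hd : ∀ v, #{w | ¬ Disjoint (T v) (T w)} ≤ d)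
    (hpd : 4 * p * d ≤ 1) (S : Finset V) :
    ∀ v, E (fun ω => good bad S ω * ib bad v ω) ≤ 2 * p * E (good bad S) := by
  induction S using Finset.strongInduction with
  | H S ih =>
  intro v
  set near := S.filter (fun w => ¬ Disjoint (T v) (T w)) with hnear
  set far := S.filter (fun w => Disjoint (T v) (T w)) with hfar
  have hPfar : 0 ≤ E (good bad far) := by
    rw [← E_const (V := V) (α := α) 0]; exact E_mono (good_nonneg bad far)
  have h1 : E (fun ω => good bad S ω * ib bad v ω) ≤ p * E (good bad far) := by
    calc _ ≤ E (fun ω => good bad far ω * ib bad v ω) := by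
          refine E_mono fun ω => ?_
          unfold good ib
          have : (∀ v ∈ S, ¬ bad v ω) → (∀ v ∈ far, ¬ bad v ω) := fun h v hv =>
            h v (Finset.mem_of_mem_filter v hv)
          split_ifs <;> simp_all
      _ = E (good bad far) * E (ib bad v) := by
          refine E_indep (T := T v) (T' := {x | x ∉ T v}) ?_ ?_ ?_
          · intro ω ω' h
            unfold ib
            rw [hdep v ω ω' (fun x hx => h x hx)]
          · intro ω ω' h
            unfold good
            have : (∀ v ∈ far, ¬ bad v ω) ↔ (∀ v ∈ far, ¬ bad v ω') := by
              refine forall₂_congr fun w hw => ?_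
              rw [hdep w ω ω']
              intro x hx
              apply h
              rw [hfar, Finset.mem_filter] at hw
              intro hx'
              exact Finset.disjoint_left.mp hw.2 hx' hx
            classical
            split_ifs <;> first | rfl | (exfalso; tauto)
          · intro x hx hx'; exact hx' hx
      _ ≤ E (good bad far) * p := by gcongr; exact hp v
      _ = _ := by ring
  have h2 : E (good bad far) - ∑ w ∈ near, E (fun ω => good bad far ω * ib bad w ω) ≤
      E (good bad S) := by
    rw [← E_sum, ← E_sub]
    refine E_mono fun ω => ?_
    rw [← Finset.mul_sum]
    have hib : ∀ w, 0 ≤ ib bad w ω := fun w => by unfold ib; split_ifs <;> simp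
    by_cases hS : ∀ v ∈ S, ¬ bad v ω
    · have : good bad S ω = 1 := by unfold good; rw [if_pos hS]
      have h' : good bad far ω ≤ 1 := by unfold good; split_ifs <;> simp
      have := mul_nonneg (good_nonneg bad far ω) (Finset.sum_nonneg fun w (_ : w ∈ near) => hib w)
      linarith
    · by_cases hf : ∀ v ∈ far, ¬ bad v ω
      · push Not at hS
        obtain ⟨w, hw, hb⟩ := hS
        have hwn : w ∈ near := by
          rw [hnear, Finset.mem_filter]
          refine ⟨hw, fun hdis => hf w ?_ hb⟩
          rw [hfar, Finset.mem_filter]; exact ⟨hw, hdis⟩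
        have e1 : ib bad w ω = 1 := by unfold ib; rw [if_pos hb]
        have e2 : good bad far ω = 1 := by unfold good; rw [if_pos hf]
        have := Finset.single_le_sum (fun w (_ : w ∈ near) => hib w) hwn
        have := good_nonneg bad S ω
        rw [e2]; linarith
      · have e2 : good bad far ω = 0 := by unfold good; rw [if_neg hf]
        have := good_nonneg bad S ω
        rw [e2]; linarith
  have h3 : ∑ w ∈ near, E (fun ω => good bad far ω * ib bad w ω) ≤
      d * (2 * p * E (good bad far)) := by
    calc _ ≤ ∑ w ∈ near, 2 * p * E (good bad far) := by
          refine Finset.sum_le_sum fun w hw => ih far ?_ w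
          rw [hfar, Finset.filter_ssubset]
          rw [hnear, Finset.mem_filter] at hw
          exact ⟨w, hw.1, hw.2⟩
      _ = (#near : ℝ) * (2 * p * E (good bad far)) := by rw [Finset.sum_const, nsmul_eq_mul]
      _ ≤ _ := by
          have : #near ≤ d := (Finset.card_le_card (by
            intro w hw; rw [hnear, Finset.mem_filter] at hw; simpa using hw.2)).trans (hd v)
          gcongr
  have h4 : E (good bad far) ≤ 2 * E (good bad S) := by nlinarith
  nlinarith

lemma lll (bad : V → (V → α) → Prop) (T : V → Finset V) (p : ℝ) (d : ℕ) (hp0 : 0 ≤ p)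
    (hdep : ∀ v ω ω', (∀ x ∈ T v, ω x = ω' x) → (bad v ω ↔ bad v ω'))
    (hp : ∀ v, E (ib bad v) ≤ p)
    (hd : ∀ v, #{w | ¬ Disjoint (T v) (T w)} ≤ d)
    (hpd : 4 * p * d ≤ 1) (hp4 : 4 * p ≤ 1) : ∃ ω : V → α, ∀ v, ¬ bad v ω := by
  have hpos : ∀ S : Finset V, 0 < E (good bad S) := by
    intro S
    induction S using Finset.induction_on with
    | empty => 
      have : good bad (∅ : Finset V) = fun _ => 1 := by funext ω; simp [good]
      rw [this, E_const]; norm_num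
    | insert v S hv ih =>
      have h1 := lll_key bad T p d hp0 hdep hp hd hpd S v
      have h2 : E (good bad S) - E (fun ω => good bad S ω * ib bad v ω) ≤
          E (good bad (insert v S)) := by
        rw [← E_sub]
        refine E_mono fun ω => ?_
        unfold good ib
        have hi : (∀ x ∈ insert v S, ¬ bad x ω) ↔ ¬ bad v ω ∧ ∀ x ∈ S, ¬ bad x ω := by simp
        split_ifs <;> first | (exfalso; tauto) | norm_num
      nlinarith
  by_contra hcon
  push Not at hcon
  have := hpos univ
  have h0 : good bad univ = fun _ => 0 := by
    funext ω
    obtain ⟨v, hv⟩ := hcon ω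
    unfold good
    rw [if_neg]; push Not; exact ⟨v, mem_univ _, hv⟩
  rw [h0, E_const] at this
  exact lt_irrefl _ this

end lll

section greedy
variable {V : Type} [Fintype V] [DecidableEq V]

lemma greedy (G : SimpleGraph V) [DecidableRel G.Adj] (k : ℕ) (n : ℕ) : ∀ Φ : V → Fin k ⊕ V,
    (#{u | ∃ w, Φ u = Sum.inr w} ≤ n) →
    (∀ u w, Φ u = Sum.inr w → w = u) →
    (∀ u w c, G.Adj u w → Φ u = Sum.inl c → Φ w ≠ Sum.inl c) →
    (∀ v, #((G.neighborFinset v).image Φ) < k) → G.Colorable k := by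
  induction n with
  | zero =>
    intro Φ h0 h1 h2 h3
    have hall : ∀ u, ∃ c, Φ u = Sum.inl c := by
      intro u
      rcases hu : Φ u with c | w
      · exact ⟨c, rfl⟩
      · exfalso
        have : u ∈ ({u | ∃ w, Φ u = Sum.inr w} : Finset V) := by simp [hu]
        rw [Finset.card_eq_zero.mp (Nat.le_zero.mp h0)] at this
        simp at this
    choose col hcol using hall
    exact ⟨SimpleGraph.Coloring.mk col fun {u w} hadj heq => h2 u w (col u) hadj (hcol u)
      (by rw [hcol w, heq])⟩
  | succ n ih =>
    intro Φ h0 h1 h2 h3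
    by_cases hex : ∃ u, Φ u = Sum.inr u
    · obtain ⟨v, hv⟩ := hex
      have hfree : ∃ c : Fin k, Sum.inl c ∉ (G.neighborFinset v).image Φ := by
        by_contra hcon
        push Not at hcon
        have : #((univ : Finset (Fin k)).image (Sum.inl : Fin k → Fin k ⊕ V)) ≤
            #((G.neighborFinset v).image Φ) := by
          apply Finset.card_le_card
          intro s hs
          obtain ⟨c, _, rfl⟩ := Finset.mem_image.mp hs
          exact hcon c
        rw [Finset.card_image_of_injective _ Sum.inl_injective, Finset.card_univ,
          Fintype.card_fin] at this
        exact absurd (h3 v) (not_lt.mpr this)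
      obtain ⟨c, hc⟩ := hfree
      have hcN : ∀ w, G.Adj v w → Φ w ≠ Sum.inl c := by
        intro w hw he
        exact hc (Finset.mem_image.mpr ⟨w, by simpa using hw, he⟩)
      let g : Fin k ⊕ V → Fin k ⊕ V := fun s => if s = Sum.inr v then Sum.inl c else s
      have hg : ∀ u, g (Φ u) = if u = v then Sum.inl c else Φ u := by
        intro u
        simp only [g]
        by_cases huv : u = v
        · subst huv; simp [hv]
        · rw [if_neg huv, if_neg]
          intro h; exact huv (h1 u v h).symm
      refine ih (g ∘ Φ) ?_ ?_ ?_ ?_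
      · have : ({u | ∃ w, (g ∘ Φ) u = Sum.inr w} : Finset V) ⊂ ({u | ∃ w, Φ u = Sum.inr w} : Finset V) := by
          rw [Finset.ssubset_iff_of_subset]
          · exact ⟨v, by simp [hv], by simp [hg]⟩
          · intro u hu
            simp only [Finset.mem_filter, Finset.mem_univ, true_and, Function.comp, hg] at hu ⊢
            obtain ⟨w, hw⟩ := hu
            split_ifs at hw
            exact ⟨w, hw⟩
        have := Finset.card_lt_card this
        omega
      · intro u w hw
        simp only [Function.comp, hg] at hw
        split_ifs at hw
        exact h1 u w hw
      · intro u w c' hadj hu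
        simp only [Function.comp, hg] at hu ⊢
        split_ifs at hu with huv
        · subst huv
          rw [if_neg hadj.ne']
          cases hu; exact hcN w hadj
        · split_ifs with hwv
          · subst hwv
            intro h; cases h
            exact hcN u hadj.symm hu
          · exact h2 u w c' hadj hu
      · intro w
        rw [← Finset.image_image]
        exact Finset.card_image_le.trans_lt (h3 w)
    · refine ih Φ ?_ h1 h2 h3
      have : ({u | ∃ w, Φ u = Sum.inr w} : Finset V) = ∅ := by
        ext u
        simp only [Finset.mem_filter, Finset.mem_univ, true_and, Finset.notMem_empty, iff_false]
        rintro ⟨w, hw⟩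
        exact hex ⟨u, by rw [hw, h1 u w hw]⟩
      rw [this]; simp

end greedy

section model
variable {V : Type} [Fintype V] [DecidableEq V] (G : SimpleGraph V) [DecidableRel G.Adj]
  {k : ℕ} (o : V → V → Bool)

def beats (ω : V → Fin k × (V → Bool)) (x u : V) : Bool :=
  xor (o x u) (xor ((ω x).2 u) ((ω u).2 x))

def kills (ω : V → Fin k × (V → Bool)) (x u : V) : Prop :=
  G.Adj x u ∧ (ω x).1 = (ω u).1 ∧ beats o ω x u = true

def ret (ω : V → Fin k × (V → Bool)) (u : V) : Prop := ∀ x, ¬ kills G o ω x u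

open Classical in
noncomputable def M (v : V) (ω : V → Fin k × (V → Bool)) (c : Fin k) : Finset V :=
  (G.neighborFinset v).filter (fun u => (ω u).1 = c ∧ ret G o ω u)

noncomputable def FN (v : V) (ω : V → Fin k × (V → Bool)) : ℕ :=
  ∑ c, min (#(M G o v ω c) - 1) 2

noncomputable def F (v : V) (ω : V → Fin k × (V → Bool)) : ℝ :=
  ∑ c, ((min (#(M G o v ω c) - 1) 2 : ℕ) : ℝ)

def rel (v x : V) (ω : V → Fin k × (V → Bool)) (c : Fin k) : Prop :=
  x ∈ G.neighborFinset v ∨ ∃ u ∈ G.neighborFinset v, G.Adj x u ∧ (ω u).1 = c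

def supp (v : V) : Finset V :=
  G.neighborFinset v ∪ (G.neighborFinset v).biUnion (fun u => G.neighborFinset u)

lemma ret_adj (ho : ∀ x u, x ≠ u → o x u = !o u x) {ω : V → Fin k × (V → Bool)} {u w : V}
    (h : G.Adj u w) (hc : (ω u).1 = (ω w).1) (hu : ret G o ω u) (hw : ret G o ω w) : False := by
  have h1 := hw u
  have h2 := hu w
  simp only [kills, h, h.symm, hc, true_and, beats] at h1 h2
  rw [ho u w h.ne] at h1
  generalize o w u = p at *
  generalize (ω u).2 w = q at *
  generalize (ω w).2 u = s at *
  revert h1 h2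
  cases p <;> cases q <;> cases s <;> simp

lemma M_congr_supp (v : V) (ω ω' : V → Fin k × (V → Bool)) (h : ∀ x ∈ supp G v, ω x = ω' x)
    (c : Fin k) : M G o v ω c = M G o v ω' c := by
  classical
  unfold M
  refine Finset.filter_congr fun u hu => ?_
  have hu' : ω u = ω' u := h u (by unfold supp; exact Finset.mem_union_left _ hu)
  rw [hu']
  refine and_congr_right fun _ => forall_congr' fun x => not_congr ?_
  unfold kills
  refine and_congr_right fun hx => ?_
  have hx' : ω x = ω' x := h x (by
    unfold supp
    refine Finset.mem_union_right _ (Finset.mem_biUnion.mpr ⟨u, hu, ?_⟩)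
    simpa using hx.symm)
  unfold beats
  rw [hu', hx']

open Classical in
lemma M_update (v x : V) (ω : V → Fin k × (V → Bool)) (a : Fin k × (V → Bool)) (c : Fin k)
    (h : ¬ (a.1 = c ∧ rel G v x ω c)) :
    M G o v (Function.update ω x a) c = (G.neighborFinset v).filter
      (fun u => u ≠ x ∧ (ω u).1 = c ∧ ∀ y, y ≠ x → ¬ kills G o ω y u) := by
  unfold M
  refine Finset.filter_congr fun u hu => ?_
  by_cases hux : u = x
  · subst hux
    simp only [Function.update_self, ne_eq, not_true_eq_false, false_and, iff_false, not_and]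
    intro hac
    exact absurd ⟨hac, Or.inl hu⟩ h
  · rw [Function.update_of_ne hux]
    simp only [ne_eq, hux, not_false_eq_true, true_and]
    refine and_congr_right fun hc => ?_
    unfold ret
    constructor
    · intro hr y hy hk
      apply hr y
      unfold kills beats at *
      rwa [Function.update_of_ne hy, Function.update_of_ne hux]
    · intro hr y hk
      by_cases hy : y = x
      · subst hy
        unfold kills at hk
        rw [Function.update_self, Function.update_of_ne hux] at hk
        exact h ⟨hk.2.1.trans hc, Or.inr ⟨u, hu, hk.1, hc⟩⟩
      · apply hr y hy
        unfold kills beats at *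
        rwa [Function.update_of_ne hy, Function.update_of_ne hux] at hk

open Classical in
noncomputable def cst (v x : V) (ω : V → Fin k × (V → Bool)) (a : Fin k × (V → Bool)) : ℝ :=
  if rel G v x ω a.1 then 2 else 0

lemma F_diff (v x : V) (ω : V → Fin k × (V → Bool)) (a b : Fin k × (V → Bool)) :
    |F G o v (Function.update ω x a) - F G o v (Function.update ω x b)| ≤
      cst G v x ω a + cst G v x ω b := by
  classical
  unfold F
  rw [← Finset.sum_sub_distrib]
  refine (Finset.abs_sum_le_sum_abs _ _).trans ?_
  have e : ∀ a : Fin k × (V → Bool), cst G v x ω a =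
      ∑ c, if a.1 = c ∧ rel G v x ω c then (2 : ℝ) else 0 := by
    intro a
    unfold cst
    simp only [ite_and]
    rw [Finset.sum_ite_eq]; simp
  rw [e a, e b, ← Finset.sum_add_distrib]
  refine Finset.sum_le_sum fun c _ => ?_
  have hb : ∀ n : ℕ, (0 : ℝ) ≤ ((min n 2 : ℕ) : ℝ) ∧ ((min n 2 : ℕ) : ℝ) ≤ 2 := fun n =>
    ⟨by positivity, by exact_mod_cast min_le_right _ _⟩
  have hab : ∀ m n : ℕ, |((min m 2 : ℕ) : ℝ) - ((min n 2 : ℕ) : ℝ)| ≤ 2 := by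
    intro m n
    rw [abs_le]; constructor <;> linarith [(hb m).1, (hb m).2, (hb n).1, (hb n).2]
  by_cases ha : a.1 = c ∧ rel G v x ω c
  · rw [if_pos ha]
    have := hab (#(M G o v (Function.update ω x a) c) - 1) (#(M G o v (Function.update ω x b) c) - 1)
    split_ifs <;> linarith
  · by_cases hb' : b.1 = c ∧ rel G v x ω c
    · rw [if_pos hb', if_neg ha]
      have := hab (#(M G o v (Function.update ω x a) c) - 1)
        (#(M G o v (Function.update ω x b) c) - 1)
      linarith
    · rw [M_update G o v x ω a c ha, M_update G o v x ω b c hb', if_neg ha, if_neg hb']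
      simp

lemma cst_sq (hk : 0 < k) (v x : V) (ω : V → Fin k × (V → Bool)) :
    (∑ a, cst G v x ω a ^ 2) / (Fintype.card (Fin k × (V → Bool)) : ℝ) ≤
      (if x ∈ G.neighborFinset v then 4 else 0) +
        4 * (#(G.neighborFinset x ∩ G.neighborFinset v) : ℝ) / k := by
  classical
  have hk' : (0 : ℝ) < k := by exact_mod_cast hk
  have hB : (0 : ℝ) < Fintype.card (V → Bool) := by exact_mod_cast Fintype.card_pos
  rw [Fintype.card_prod, Fintype.card_fin, Fintype.sum_prod_type]
  have hcc : ∀ (i : Fin k) (η : V → Bool), cst G v x ω (i, η) ^ 2 =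
      if rel G v x ω i then (2 : ℝ) ^ 2 else 0 := by
    intro i η
    unfold cst
    split_ifs <;> norm_num
  simp only [hcc, Finset.sum_const, Finset.card_univ, nsmul_eq_mul]
  rw [← Finset.mul_sum, Nat.cast_mul, div_le_iff₀ (by positivity)]
  rw [← Finset.sum_filter, Finset.sum_const, nsmul_eq_mul]
  by_cases hx : x ∈ G.neighborFinset v
  · rw [if_pos hx]
    have h1 : (#{c | rel G v x ω c} : ℝ) ≤ k := by
      have := Finset.card_le_univ ({c | rel G v x ω c} : Finset (Fin k))
      rw [Fintype.card_fin] at this; exact_mod_cast this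
    have h2 : (0:ℝ) ≤ 4 * (#(G.neighborFinset x ∩ G.neighborFinset v) : ℝ) / k := by positivity
    calc _ ≤ (Fintype.card (V → Bool) : ℝ) * (k * 2 ^ 2) := by gcongr
      _ = 4 * (k * (Fintype.card (V → Bool) : ℝ)) := by ring
      _ ≤ _ := by gcongr; linarith
  · rw [if_neg hx]
    have h1 : #{c | rel G v x ω c} ≤ #(G.neighborFinset x ∩ G.neighborFinset v) := by
      refine (Finset.card_le_card (t := (G.neighborFinset x ∩ G.neighborFinset v).image
        (fun u => (ω u).1)) ?_).trans Finset.card_image_le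
      intro c hc
      have hc := (Finset.mem_filter.mp hc).2
      rcases hc with hc | ⟨u, hu, hxu, hc⟩
      · exact absurd hc hx
      · exact Finset.mem_image.mpr ⟨u, by simp at hu ⊢; exact ⟨hxu, hu⟩, hc⟩
    have h1' : (#{c | rel G v x ω c} : ℝ) ≤ #(G.neighborFinset x ∩ G.neighborFinset v) := by
      exact_mod_cast h1
    calc _ ≤ (Fintype.card (V → Bool) : ℝ) *
          ((#(G.neighborFinset x ∩ G.neighborFinset v) : ℝ) * 2 ^ 2) := by gcongr
      _ = _ := by field_simp; ring

lemma sum_s (r : ℕ) (hreg : ∀ v, G.degree v = r) (v : V) :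
    ∑ x, ((if x ∈ G.neighborFinset v then (4 : ℝ) else 0) +
        4 * (#(G.neighborFinset x ∩ G.neighborFinset v) : ℝ) / k) = 4 * r + 4 * (r : ℝ) ^ 2 / k := by
  rw [Finset.sum_add_distrib, ← Finset.sum_filter, Finset.sum_const, ← Finset.sum_div,
    ← Finset.mul_sum]
  have h1 : ({x | x ∈ G.neighborFinset v} : Finset V) = G.neighborFinset v := by ext; simp
  rw [h1, G.card_neighborFinset_eq_degree, hreg]
  have h2 : ∑ x, #(G.neighborFinset x ∩ G.neighborFinset v) = r ^ 2 := by
    have : ∀ x, #(G.neighborFinset x ∩ G.neighborFinset v) =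
        ∑ u ∈ G.neighborFinset v, if G.Adj u x then 1 else 0 := by
      intro x
      rw [← Finset.sum_filter, ← Finset.card_eq_sum_ones]
      congr 1; ext u; simp [G.adj_comm u x]; tauto
    simp only [this]
    rw [Finset.sum_comm]
    have h3 : ∀ u, (∑ x, if G.Adj u x then 1 else 0) = r := by
      intro u
      rw [← hreg u, ← Finset.sum_filter, ← Finset.card_eq_sum_ones, ← G.card_neighborFinset_eq_degree]
      congr 1; ext; simp
    simp only [h3]
    rw [Finset.sum_const, G.card_neighborFinset_eq_degree, hreg, smul_eq_mul, sq]
  have h2' : ∑ x, (#(G.neighborFinset x ∩ G.neighborFinset v) : ℝ) = (r : ℝ) ^ 2 := by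
    exact_mod_cast h2
  rw [h2', nsmul_eq_mul]; ring

lemma F_tail (hk : 0 < k) (r : ℕ) (hreg : ∀ v, G.degree v = r) (v : V) (lam : ℝ) (h0 : 0 ≤ lam)
    (h1 : lam ≤ 1 / 4) (T : ℝ) :
    E (fun ω : V → Fin k × (V → Bool) => if F G o v ω < T then (1 : ℝ) else 0) ≤
      Real.exp (4 * lam ^ 2 * (4 * r + 4 * (r : ℝ) ^ 2 / k) +
        lam * (T - E (F (k := k) G o v))) := by
  have : Nonempty (Fin k) := ⟨⟨0, hk⟩⟩
  rw [← sum_s G r hreg v]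
  refine tail (F G o v) (cst G v) _ lam h0 h1 ?_ ?_ (F_diff G o v) (cst_sq G hk v)
    (G.neighborFinset v) ?_ ?_ T
  · intro x ω a; unfold cst; split_ifs <;> norm_num
  · intro x ω a; unfold cst; split_ifs <;> norm_num
  · intro x hx y ω b a
    unfold cst rel
    simp only [hx, true_or]
  · intro x y hy ω b a
    have : rel G v x (Function.update ω y b) a.1 ↔ rel G v x ω a.1 := by
      unfold rel
      refine or_congr_right ?_
      refine exists_congr fun u => and_congr_right fun hu => ?_
      rw [Function.update_of_ne]
      rintro rfl; exact hy hu
    unfold cst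
    split_ifs <;> first | rfl | (exfalso; tauto)

lemma final_color (ho : ∀ x u, x ≠ u → o x u = !o u x) (r : ℕ) (hreg : ∀ v, G.degree v = r)
    (ω : V → Fin k × (V → Bool)) (h : ∀ v, r < k + FN G o v ω) : G.Colorable k := by
  classical
  let Φ : V → Fin k ⊕ V := fun u => if ret G o ω u then Sum.inl (ω u).1 else Sum.inr u
  refine greedy G k (Fintype.card V) Φ (Finset.card_le_univ _) ?_ ?_ ?_
  · intro u w hu
    simp only [Φ] at hu
    split_ifs at hu
    cases hu; rfl
  · intro u w c hadj hu hw
    simp only [Φ] at hu hw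
    split_ifs at hu hw with h1 h2
    cases hu
    exact ret_adj G o ho hadj (Sum.inl_injective hw).symm h1 h2
  · intro v
    set I := (G.neighborFinset v).image Φ with hI
    have hfib : ∀ c, #{u ∈ G.neighborFinset v | Φ u = Sum.inl c} = #(M G o v ω c) := by
      intro c
      congr 1
      unfold M
      refine Finset.filter_congr fun u _ => ?_
      simp only [Φ]
      split_ifs with hr <;> simp [hr]
    have hcard : r = ∑ s ∈ I, #{u ∈ G.neighborFinset v | Φ u = s} := by
      rw [← hreg v, ← G.card_neighborFinset_eq_degree]
      exact Finset.card_eq_sum_card_image Φ _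
    have hpos : ∀ s ∈ I, 1 ≤ #{u ∈ G.neighborFinset v | Φ u = s} := by
      intro s hs
      obtain ⟨u, hu, rfl⟩ := Finset.mem_image.mp hs
      exact Finset.card_pos.mpr ⟨u, by simpa using hu⟩
    have hsplit : ∑ s ∈ I, #{u ∈ G.neighborFinset v | Φ u = s} =
        #I + ∑ s ∈ I, (#{u ∈ G.neighborFinset v | Φ u = s} - 1) := by
      rw [Finset.card_eq_sum_ones, ← Finset.sum_add_distrib]
      refine Finset.sum_congr rfl fun s hs => ?_
      have := hpos s hs; omega
    have hF : FN G o v ω ≤ ∑ s ∈ I, (#{u ∈ G.neighborFinset v | Φ u = s} - 1) := by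
      have h1 : ∑ s ∈ I, (#{u ∈ G.neighborFinset v | Φ u = s} - 1) =
          ∑ s, (#{u ∈ G.neighborFinset v | Φ u = s} - 1) := by
        refine Finset.sum_subset (Finset.subset_univ _) fun s _ hs => ?_
        have : ({u ∈ G.neighborFinset v | Φ u = s} : Finset V) = ∅ := by
          rw [Finset.filter_eq_empty_iff]
          intro u hu he
          exact hs (Finset.mem_image.mpr ⟨u, hu, he⟩)
        rw [this]; simp
      rw [h1, Fintype.sum_sum_type]
      refine le_trans ?_ (Nat.le_add_right _ _)
      unfold FN
      refine Finset.sum_le_sum fun c _ => ?_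
      rw [hfib]
      exact min_le_left _ _
    have := h v
    omega

end model

section expect
variable {V : Type} [Fintype V] [DecidableEq V] (G : SimpleGraph V) [DecidableRel G.Adj]
  {k : ℕ} (o : V → V → Bool)

lemma ind_mul {P Q R : Prop} [Decidable P] [Decidable Q] [Decidable R] (h : P ↔ Q ∧ R) :
    (if P then (1 : ℝ) else 0) = (if Q then (1 : ℝ) else 0) * (if R then (1 : ℝ) else 0) := by
  by_cases hQ : Q <;> by_cases hR : R <;> simp [h, hQ, hR]

open Classical in
noncomputable def mono (S : Finset V) (u0 : V) (ω : V → Fin k × (V → Bool)) : ℝ :=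
  if ∀ u ∈ S, (ω u).1 = (ω u0).1 then 1 else 0

open Classical in
noncomputable def okL (S : Finset V) (L : List V) (ω : V → Fin k × (V → Bool)) : ℝ :=
  if ∀ x ∈ L, ∀ u ∈ S, ¬ kills G o ω x u then 1 else 0

noncomputable def q (k : ℕ) (S : Finset V) (x : V) : ℝ :=
  1 - (1 - (1 / 2 : ℝ) ^ #{u ∈ S | G.Adj x u}) / k

lemma count_bool (J : Finset V) (t : V → Bool) :
    (#{η : V → Bool | ∀ u ∈ J, η u = t u} : ℝ) =
      (1 / 2 : ℝ) ^ #J * (Fintype.card (V → Bool) : ℝ) := by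
  have h1 : ({η : V → Bool | ∀ u ∈ J, η u = t u} : Finset (V → Bool)) =
      Fintype.piFinset (fun u => if u ∈ J then ({t u} : Finset Bool) else univ) := by
    ext η
    simp only [Finset.mem_filter, Finset.mem_univ, true_and, Fintype.mem_piFinset]
    refine forall_congr' fun u => ?_
    by_cases hu : u ∈ J <;> simp [hu]
  have h2 : #{η : V → Bool | ∀ u ∈ J, η u = t u} * 2 ^ #J = 2 ^ Fintype.card V := by
    rw [h1, Fintype.card_piFinset]
    have h3 : ∀ u, #(if u ∈ J then ({t u} : Finset Bool) else univ) = if u ∈ J then 1 else 2 := by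
      intro u; split_ifs <;> simp
    simp only [h3]
    rw [← Finset.prod_const, ← Finset.prod_subset (Finset.subset_univ Jᶜ)]
    · rw [← Finset.card_univ, ← Finset.prod_const, ← Finset.prod_compl_mul_prod J]
      congr 1
      refine Finset.prod_congr rfl fun u hu => ?_
      rw [if_neg (by simpa using hu)]
    · intro u _ hu
      rw [if_pos (by simpa using hu)]
  have h4 : (#{η : V → Bool | ∀ u ∈ J, η u = t u} : ℝ) * 2 ^ #J = 2 ^ Fintype.card V := by
    exact_mod_cast h2
  have h5 : (Fintype.card (V → Bool) : ℝ) = 2 ^ Fintype.card V := by simp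
  rw [h5, ← h4, div_pow, one_pow]
  field_simp

lemma A_ok (hk : 0 < k) (S : Finset V) (u0 : V) (hu0 : u0 ∈ S) (x : V) (hx : x ∉ S)
    (ω : V → Fin k × (V → Bool)) :
    A x (fun ω => mono S u0 ω * okL G o S [x] ω) ω = mono S u0 ω * q G k S x := by
  classical
  have : Nonempty (Fin k) := ⟨⟨0, hk⟩⟩
  have hinv : ∀ (ω : V → Fin k × (V → Bool)) a, mono S u0 (Function.update ω x a) = mono S u0 ω := by
    intro ω a
    have : (∀ u ∈ S, (Function.update ω x a u).1 = (Function.update ω x a u0).1) ↔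
        ∀ u ∈ S, (ω u).1 = (ω u0).1 := by
      refine forall₂_congr fun u hu => ?_
      rw [Function.update_of_ne (by rintro rfl; exact hx hu),
        Function.update_of_ne (by rintro rfl; exact hx hu0)]
    exact if_congr this rfl rfl
  rw [A_pull x hinv]
  by_cases hm : ∀ u ∈ S, (ω u).1 = (ω u0).1
  swap
  · have : mono S u0 ω = 0 := by unfold mono; rw [if_neg hm]
    simp [this]
  show mono S u0 ω * A x (okL G o S [x]) ω = _
  congr 1
  set B : ℝ := (Fintype.card (V → Bool) : ℝ) with hB
  have hBpos : 0 < B := by rw [hB]; exact_mod_cast Fintype.card_pos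
  have hk' : (0 : ℝ) < k := by exact_mod_cast hk
  set J := ({u ∈ S | G.Adj x u} : Finset V) with hJ
  have hok : ∀ (i : Fin k) (η : V → Bool), okL G o S [x] (Function.update ω x (i, η)) =
      if (i = (ω u0).1 → ∀ u ∈ J, η u = xor (o x u) ((ω u).2 x)) then 1 else 0 := by
    intro i η
    have : (∀ y ∈ [x], ∀ u ∈ S, ¬ kills G o (Function.update ω x (i, η)) y u) ↔
        (i = (ω u0).1 → ∀ u ∈ J, η u = xor (o x u) ((ω u).2 x)) := by
      simp only [List.mem_singleton, forall_eq]
      constructor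
      · intro h hi u hu
        rw [hJ, Finset.mem_filter] at hu
        have hux : u ≠ x := by rintro rfl; exact hx hu.1
        have := h u hu.1
        unfold kills beats at this
        rw [Function.update_self, Function.update_of_ne hux] at this
        simp only [hu.2, hm u hu.1, hi, true_and] at this
        revert this
        cases η u <;> cases o x u <;> cases (ω u).2 x <;> simp
      · intro h u hu hkill
        have hux : u ≠ x := by rintro rfl; exact hx hu
        unfold kills beats at hkill
        rw [Function.update_self, Function.update_of_ne hux] at hkill
        obtain ⟨h1, h2, h3⟩ := hkill
        have := h (h2.trans (hm u hu)) u (by rw [hJ, Finset.mem_filter]; exact ⟨hu, h1⟩)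
        simp only [this] at h3
        revert h3
        cases o x u <;> cases (ω u).2 x <;> simp
    exact if_congr this rfl rfl
  unfold A
  rw [Fintype.sum_prod_type, Fintype.card_prod, Fintype.card_fin, Nat.cast_mul, ← hB]
  have hη : ∀ i : Fin k, ∑ η : V → Bool, okL G o S [x] (Function.update ω x (i, η)) =
      B - if i = (ω u0).1 then B * (1 - (1 / 2 : ℝ) ^ #J) else 0 := by
    intro i
    simp only [hok]
    by_cases hi : i = (ω u0).1
    · simp only [hi, forall_const, if_true]
      rw [← Finset.sum_filter, Finset.sum_const, nsmul_eq_mul, mul_one,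
        count_bool J (fun u => xor (o x u) ((ω u).2 x))]
      ring
    · simp [hi, hB]
  simp only [hη]
  rw [Finset.sum_sub_distrib, Finset.sum_ite_eq']
  simp only [Finset.sum_const, Finset.card_univ, Fintype.card_fin, nsmul_eq_mul, Finset.mem_univ,
    if_true]
  unfold q
  rw [← hJ]
  field_simp

lemma AL_ok (hk : 0 < k) (S : Finset V) (u0 : V) (hu0 : u0 ∈ S) (L : List V) (hL : L.Nodup)
    (hLS : ∀ x ∈ L, x ∉ S) :
    AL L (fun ω : V → Fin k × (V → Bool) => mono S u0 ω * okL G o S L ω) =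
      fun ω => mono S u0 ω * (L.map (q G k S)).prod := by
  classical
  have : Nonempty (Fin k) := ⟨⟨0, hk⟩⟩
  induction L with
  | nil => funext ω; simp [AL, okL]
  | cons x L ih =>
    rw [List.nodup_cons] at hL
    have hxS := hLS x List.mem_cons_self
    have ih' := ih hL.2 (fun y hy => hLS y (List.mem_cons_of_mem _ hy))
    have e : (fun ω : V → Fin k × (V → Bool) => mono S u0 ω * okL G o S (x :: L) ω) =
        fun ω => okL G o S [x] ω * (mono S u0 ω * okL G o S L ω) := by
      funext ω
      have : (∀ y ∈ x :: L, ∀ u ∈ S, ¬ kills G o ω y u) ↔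
          (∀ y ∈ [x], ∀ u ∈ S, ¬ kills G o ω y u) ∧ (∀ y ∈ L, ∀ u ∈ S, ¬ kills G o ω y u) := by
        simp
      have h2 : okL G o S (x :: L) ω = okL G o S [x] ω * okL G o S L ω := by
        exact ind_mul this
      rw [h2]; ring
    rw [e, AL_cons, AL_pull, ih']
    · funext ω
      have e2 : (fun ω : V → Fin k × (V → Bool) =>
          okL G o S [x] ω * (mono S u0 ω * (L.map (q G k S)).prod)) =
          fun ω => (L.map (q G k S)).prod * (mono S u0 ω * okL G o S [x] ω) := by
        funext ω; ring
      rw [e2, A_pull x (g := fun _ => (L.map (q G k S)).prod) (fun _ _ => rfl)]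
      simp only [A_ok G o hk S u0 hu0 x hxS, List.map_cons, List.prod_cons]
      ring
    · intro y hy ω a
      have hyx : x ≠ y := by rintro rfl; exact hL.1 hy
      have hyS := hLS y (List.mem_cons_of_mem _ hy)
      have : (∀ z ∈ [x], ∀ u ∈ S, ¬ kills G o (Function.update ω y a) z u) ↔
          (∀ z ∈ [x], ∀ u ∈ S, ¬ kills G o ω z u) := by
        simp only [List.mem_singleton, forall_eq]
        refine forall₂_congr fun u hu => ?_
        unfold kills beats
        rw [Function.update_of_ne hyx, Function.update_of_ne (by rintro rfl; exact hyS hu)]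
      exact if_congr this rfl rfl

lemma E_S (hk : 0 < k) (S : Finset V) (u0 : V) (hu0 : u0 ∈ S) :
    E (fun ω : V → Fin k × (V → Bool) => mono S u0 ω * okL G o S Sᶜ.toList ω) =
      E (mono (k := k) S u0) * ∏ x ∈ Sᶜ, q G k S x := by
  have : Nonempty (Fin k) := ⟨⟨0, hk⟩⟩
  rw [← E_AL Sᶜ.toList, AL_ok G o hk S u0 hu0 _ (Finset.nodup_toList _) (by simp), E_mul_const,
    Finset.prod_map_toList]

/-- one more vertex with the same colour -/
lemma E_col (hk : 0 < k) (z y : V) (hzy : z ≠ y) (g : (V → Fin k × (V → Bool)) → ℝ)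
    (hg : ∀ ω a, g (Function.update ω z a) = g ω) :
    E (fun ω => g ω * if (ω z).1 = (ω y).1 then (1 : ℝ) else 0) = E g * (1 / k) := by
  have : Nonempty (Fin k) := ⟨⟨0, hk⟩⟩
  have hk' : (0 : ℝ) < k := by exact_mod_cast hk
  have hBpos : (0 : ℝ) < (Fintype.card (V → Bool) : ℝ) := by exact_mod_cast Fintype.card_pos
  rw [← E_A z, A_pull z hg, ← E_mul_const]
  congr 1; funext ω; congr 1
  unfold A
  simp only [Function.update_self, Function.update_of_ne hzy.symm]
  rw [Fintype.sum_prod_type, Fintype.card_prod, Fintype.card_fin, Nat.cast_mul]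
  have e : ∀ i : Fin k, (∑ _η : V → Bool, if i = (ω y).1 then (1 : ℝ) else 0) =
      (Fintype.card (V → Bool) : ℝ) * if i = (ω y).1 then (1 : ℝ) else 0 := by
    intro i
    rw [Finset.sum_const, Finset.card_univ, nsmul_eq_mul]
  refine (congrArg (· / _) (Finset.sum_congr rfl fun i _ => e i)).trans ?_
  rw [← Finset.mul_sum, Finset.sum_ite_eq']
  simp only [Finset.mem_univ, if_true]
  field_simp

open Classical in
noncomputable def J2 (x y : V) (ω : V → Fin k × (V → Bool)) : ℝ :=
  if (ω x).1 = (ω y).1 ∧ ret G o ω x ∧ ret G o ω y then 1 else 0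

open Classical in
noncomputable def J3 (x y z : V) (ω : V → Fin k × (V → Bool)) : ℝ :=
  if ((ω x).1 = (ω y).1 ∧ (ω z).1 = (ω y).1) ∧ ret G o ω x ∧ ret G o ω y ∧ ret G o ω z then 1 else 0

lemma ok_iff (S : Finset V) (hS : ∀ x ∈ S, ∀ y ∈ S, ¬ G.Adj x y) (ω : V → Fin k × (V → Bool)) :
    (∀ x ∈ Sᶜ.toList, ∀ u ∈ S, ¬ kills G o ω x u) ↔ ∀ u ∈ S, ret G o ω u := by
  constructor
  · intro h u hu x hk
    by_cases hx : x ∈ S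
    · exact hS x hx u hu hk.1
    · exact h x (by simpa using hx) u hu hk
  · intro h x _ u hu
    exact h u hu x

lemma E_J2 (hk : 0 < k) (x y : V) (hxy : x ≠ y) (hadj : ¬ G.Adj x y) :
    E (J2 (k := k) G o x y) = 1 / k * ∏ w ∈ ({x, y} : Finset V)ᶜ, q G k {x, y} w := by
  classical
  have : Nonempty (Fin k) := ⟨⟨0, hk⟩⟩
  have hS : ∀ a ∈ ({x, y} : Finset V), ∀ b ∈ ({x, y} : Finset V), ¬ G.Adj a b := by
    have := fun h => hadj (SimpleGraph.Adj.symm h)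
    simp; tauto
  have e : J2 (k := k) G o x y = fun ω => mono {x, y} y ω * okL G o {x, y} ({x, y} : Finset V)ᶜ.toList ω := by
    funext ω
    have h1 := ok_iff G o {x, y} hS ω
    have h2 : (∀ u ∈ ({x, y} : Finset V), ret G o ω u) ↔ ret G o ω x ∧ ret G o ω y := by simp
    have h3 : (∀ u ∈ ({x, y} : Finset V), (ω u).1 = (ω y).1) ↔ (ω x).1 = (ω y).1 := by simp
    exact ind_mul (and_congr h3.symm (h2.symm.trans h1.symm))
  rw [e, E_S G o hk _ _ (by simp)]
  congr 1
  have e2 : mono (k := k) {x, y} y = fun ω => 1 * if (ω x).1 = (ω y).1 then (1 : ℝ) else 0 := by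
    funext ω
    unfold mono
    have h3 : (∀ u ∈ ({x, y} : Finset V), (ω u).1 = (ω y).1) ↔ (ω x).1 = (ω y).1 := by simp
    rw [one_mul]
    exact if_congr h3 rfl rfl
  rw [e2, E_col hk x y hxy (fun _ => 1) (fun _ _ => rfl), E_const, one_mul]

lemma E_J3 (hk : 0 < k) (x y z : V) (hxy : x ≠ y) (hzx : z ≠ x) (hzy : z ≠ y)
    (h1 : ¬ G.Adj x y) (h2 : ¬ G.Adj x z) (h3 : ¬ G.Adj y z) :
    E (J3 (k := k) G o x y z) = 1 / k * (1 / k) *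
      ∏ w ∈ ({x, y, z} : Finset V)ᶜ, q G k {x, y, z} w := by
  classical
  have : Nonempty (Fin k) := ⟨⟨0, hk⟩⟩
  have hS : ∀ a ∈ ({x, y, z} : Finset V), ∀ b ∈ ({x, y, z} : Finset V), ¬ G.Adj a b := by
    have h1' := fun h => h1 (SimpleGraph.Adj.symm h)
    have h2' := fun h => h2 (SimpleGraph.Adj.symm h)
    have h3' := fun h => h3 (SimpleGraph.Adj.symm h)
    simp; tauto
  have hm : ∀ ω : V → Fin k × (V → Bool), (∀ u ∈ ({x, y, z} : Finset V), (ω u).1 = (ω y).1) ↔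
      ((ω x).1 = (ω y).1 ∧ (ω z).1 = (ω y).1) := by intro ω; simp
  have e : J3 (k := k) G o x y z = fun ω => mono {x, y, z} y ω *
      okL G o {x, y, z} ({x, y, z} : Finset V)ᶜ.toList ω := by
    funext ω
    have h1 := ok_iff G o {x, y, z} hS ω
    have h2 : (∀ u ∈ ({x, y, z} : Finset V), ret G o ω u) ↔
      ret G o ω x ∧ ret G o ω y ∧ ret G o ω z := by simp
    have h3 := hm ω
    exact ind_mul (and_congr h3.symm (h2.symm.trans h1.symm))
  rw [e, E_S G o hk _ _ (by simp)]
  congr 1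
  have e2 : mono (k := k) {x, y, z} y = fun ω => (1 * if (ω x).1 = (ω y).1 then (1 : ℝ) else 0) *
      if (ω z).1 = (ω y).1 then (1 : ℝ) else 0 := by
    funext ω
    unfold mono
    have h3 := hm ω
    rw [one_mul]
    exact ind_mul h3
  rw [e2, E_col hk z y hzy, E_col hk x y hxy (fun _ => 1) (fun _ _ => rfl), E_const, one_mul]
  intro ω a
  rw [Function.update_of_ne hzx.symm, Function.update_of_ne hzy.symm]

end expect

section bounds
variable {V : Type} [Fintype V] [DecidableEq V] (G : SimpleGraph V) [DecidableRel G.Adj]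
  {k : ℕ} (o : V → V → Bool)

lemma sum_j (r : ℕ) (hreg : ∀ v, G.degree v = r) (S : Finset V) :
    ∑ w, #{u ∈ S | G.Adj w u} = #S * r := by
  have : ∀ w, #{u ∈ S | G.Adj w u} = ∑ u ∈ S, if G.Adj u w then 1 else 0 := by
    intro w
    rw [← Finset.sum_filter, ← Finset.card_eq_sum_ones]
    congr 1; ext u; simp [G.adj_comm u w]
  simp only [this]
  rw [Finset.sum_comm]
  have h3 : ∀ u, (∑ x, if G.Adj u x then 1 else 0) = r := by
    intro u
    rw [← hreg u, ← Finset.sum_filter, ← Finset.card_eq_sum_ones, ← G.card_neighborFinset_eq_degree]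
    congr 1; ext; simp
  simp only [h3, Finset.sum_const, smul_eq_mul]

lemma E_J2_ge (hk : 0 < k) (r : ℕ) (hreg : ∀ v, G.degree v = r) (x y : V) (hxy : x ≠ y)
    (hadj : ¬ G.Adj x y) :
    1 / k * (1 - 1 / (2 * k) : ℝ) ^ (2 * r) ≤ E (J2 (k := k) G o x y) := by
  rw [E_J2 G o hk x y hxy hadj]
  have hk' : (1 : ℝ) ≤ k := by exact_mod_cast hk
  set t : ℝ := 1 / (2 * k) with ht
  have ht0 : 0 ≤ t := by positivity
  have ht1 : t ≤ 1 / 2 := by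
    rw [ht]; apply one_div_le_one_div_of_le <;> linarith
  have htk : (1 : ℝ) / k = 2 * t := by rw [ht]; field_simp
  gcongr
  have hj2 : ∀ w, #{u ∈ ({x, y} : Finset V) | G.Adj w u} ≤ 2 := fun w =>
    (Finset.card_filter_le _ _).trans Finset.card_le_two
  have hq : ∀ w, (1 - t) ^ #{u ∈ ({x, y} : Finset V) | G.Adj w u} ≤ q G k {x, y} w := by
    intro w
    unfold q
    have := hj2 w
    rw [div_eq_mul_one_div, htk]
    generalize #{u ∈ ({x, y} : Finset V) | G.Adj w u} = j at *
    interval_cases j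
    · norm_num
    · norm_num; linarith
    · norm_num; nlinarith
  calc (1 - t) ^ (2 * r) ≤ (1 - t) ^ (∑ w ∈ ({x, y} : Finset V)ᶜ, #{u ∈ ({x, y} : Finset V) | G.Adj w u}) := by
        apply pow_le_pow_of_le_one (by linarith) (by linarith)
        calc _ ≤ ∑ w, #{u ∈ ({x, y} : Finset V) | G.Adj w u} :=
              Finset.sum_le_sum_of_subset (Finset.subset_univ _)
          _ = 2 * r := by rw [sum_j G r hreg, Finset.card_pair hxy]
    _ = ∏ w ∈ ({x, y} : Finset V)ᶜ, (1 - t) ^ #{u ∈ ({x, y} : Finset V) | G.Adj w u} := by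
        rw [Finset.prod_pow_eq_pow_sum]
    _ ≤ _ := Finset.prod_le_prod (fun w _ => by apply pow_nonneg; linarith) (fun w _ => hq w)

lemma E_J3_le (hk : 0 < k) (r : ℕ) (hreg : ∀ v, G.degree v = r) (x y z : V) (hxy : x ≠ y)
    (hzx : z ≠ x) (hzy : z ≠ y) (h1 : ¬ G.Adj x y) (h2 : ¬ G.Adj x z) (h3 : ¬ G.Adj y z) :
    E (J3 (k := k) G o x y z) ≤ 1 / k * (1 / k) * Real.exp (-(7 * r / (8 * k))) := by
  rw [E_J3 G o hk x y z hxy hzx hzy h1 h2 h3]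
  have hk' : (1 : ℝ) ≤ k := by exact_mod_cast hk
  set S : Finset V := {x, y, z} with hS
  have hcard : #S = 3 := by
    rw [hS, Finset.card_eq_three]; exact ⟨x, y, z, hxy, hzx.symm, hzy.symm, rfl⟩
  have hj3 : ∀ w, #{u ∈ S | G.Adj w u} ≤ 3 := fun w =>
    hcard ▸ (Finset.card_filter_le _ _)
  have hq0 : ∀ w, 0 ≤ q G k S w := by
    intro w
    unfold q
    have a1 : (0 : ℝ) ≤ (1 / 2 : ℝ) ^ #{u ∈ S | G.Adj w u} := by positivity
    have : (1 - (1 / 2 : ℝ) ^ #{u ∈ S | G.Adj w u}) / k ≤ 1 := by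
      rw [div_le_one (by linarith)]; linarith
    linarith
  have hq : ∀ w, q G k S w ≤ Real.exp (-(7 / (24 * k)) * #{u ∈ S | G.Adj w u}) := by
    intro w
    have := hj3 w
    have hh : q G k S w ≤ 1 - 7 / (24 * k) * #{u ∈ S | G.Adj w u} := by
      unfold q
      have e : (7 : ℝ) / (24 * k) * #{u ∈ S | G.Adj w u} = (7 / 24 * #{u ∈ S | G.Adj w u}) / k := by
        field_simp
      rw [e]
      gcongr
      generalize #{u ∈ S | G.Adj w u} = j at *
      interval_cases j <;> norm_num
    have := Real.add_one_le_exp (-(7 / (24 * k)) * #{u ∈ S | G.Adj w u} : ℝ)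
    linarith
  gcongr
  calc _ ≤ ∏ w ∈ Sᶜ, Real.exp (-(7 / (24 * k)) * #{u ∈ S | G.Adj w u}) :=
        Finset.prod_le_prod (fun w _ => hq0 w) (fun w _ => hq w)
    _ = Real.exp (-(7 / (24 * k)) * ∑ w ∈ Sᶜ, (#{u ∈ S | G.Adj w u} : ℝ)) := by
        rw [← Real.exp_sum, Finset.mul_sum]
    _ = _ := by
        have hsub : ∑ w ∈ Sᶜ, #{u ∈ S | G.Adj w u} = 3 * r := by
          rw [← hcard, ← sum_j G r hreg S]
          refine Finset.sum_subset (Finset.subset_univ _) fun w _ hw => ?_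
          have hw : w ∈ S := by simpa using hw
          rw [Finset.card_eq_zero, Finset.filter_eq_empty_iff]
          have h1' := fun h : G.Adj y x => h1 h.symm
          have h2' := fun h : G.Adj z x => h2 h.symm
          have h3' := fun h : G.Adj z y => h3 h.symm
          rw [hS] at hw ⊢
          simp only [Finset.mem_insert, Finset.mem_singleton] at hw ⊢
          rintro u (rfl | rfl | rfl) <;> rcases hw with rfl | rfl | rfl <;> simp_all
        have : ∑ w ∈ Sᶜ, (#{u ∈ S | G.Adj w u} : ℝ) = 3 * r := by exact_mod_cast hsub
        rw [this]; congr 1; field_simp; ring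

lemma h_bound (m : ℕ) : (m : ℝ) * (m - 1) / 2 - (m : ℝ) * (m - 1) * (m - 2) / 6 ≤
    ((min (m - 1) 2 : ℕ) : ℝ) := by
  by_cases h : m ≤ 4
  · interval_cases m <;> norm_num
  · have h5 : (5 : ℝ) ≤ m := by exact_mod_cast (by omega : 5 ≤ m)
    have : (0 : ℝ) ≤ ((min (m - 1) 2 : ℕ) : ℝ) := by positivity
    have h2 : (m : ℝ) * (m - 1) / 2 - (m : ℝ) * (m - 1) * (m - 2) / 6 =
      -((m : ℝ) * (m - 1) * (m - 5) / 6) := by ring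
    have : 0 ≤ (m : ℝ) * (m - 1) * (m - 5) / 6 := by
      have : (0 : ℝ) ≤ m - 5 := by linarith
      have : (0 : ℝ) ≤ m - 1 := by linarith
      positivity
    linarith

lemma F_lower (v : V) (ω : V → Fin k × (V → Bool)) :
    1 / 2 * (∑ x ∈ G.neighborFinset v, ∑ y ∈ (G.neighborFinset v).erase x, J2 G o x y ω) -
    1 / 6 * (∑ x ∈ G.neighborFinset v, ∑ y ∈ (G.neighborFinset v).erase x,
      ∑ z ∈ ((G.neighborFinset v).erase x).erase y, J3 G o x y z ω) ≤ F G o v ω := by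
  classical
  set N := G.neighborFinset v with hN
  let i : Fin k → V → ℝ := fun c x => if (ω x).1 = c ∧ ret G o ω x then 1 else 0
  have hm : ∀ c, (#(M G o v ω c) : ℝ) = ∑ x ∈ N, i c x := by
    intro c
    simp only [i]
    rw [← Finset.sum_filter, Finset.sum_const, nsmul_eq_mul, mul_one]
    rfl
  have hi : ∀ c x, i c x * i c x = i c x := by
    intro c x; simp only [i]; split_ifs <;> simp
  have e2 : ∀ c, ∑ x ∈ N, ∑ y ∈ N.erase x, i c x * i c y =
      (#(M G o v ω c) : ℝ) * (#(M G o v ω c) - 1) := by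
    intro c
    have : ∀ x ∈ N, ∑ y ∈ N.erase x, i c x * i c y = i c x * (#(M G o v ω c) - 1) := by
      intro x hx
      rw [← Finset.mul_sum, Finset.sum_erase_eq_sub hx, ← hm]
      linear_combination -hi c x
    rw [Finset.sum_congr rfl this, ← Finset.sum_mul, ← hm]
  have e3 : ∀ c, ∑ x ∈ N, ∑ y ∈ N.erase x, ∑ z ∈ (N.erase x).erase y, i c x * i c y * i c z =
      (#(M G o v ω c) : ℝ) * (#(M G o v ω c) - 1) * (#(M G o v ω c) - 2) := by
    intro c
    rw [← e2, Finset.sum_mul]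
    refine Finset.sum_congr rfl fun x hx => ?_
    rw [Finset.sum_mul]
    refine Finset.sum_congr rfl fun y hy => ?_
    rw [← Finset.mul_sum, Finset.sum_erase_eq_sub hy, Finset.sum_erase_eq_sub hx, ← hm]
    linear_combination (-i c y) * hi c x - i c x * hi c y
  have j2 : ∀ x y, J2 G o x y ω = ∑ c, i c x * i c y := by
    intro x y
    have : ∀ c, i c x * i c y = if (ω x).1 = c then J2 G o x y ω else 0 := by
      intro c
      simp only [i, J2]
      by_cases h1 : (ω x).1 = c
      · subst h1
        by_cases h2 : (ω x).1 = (ω y).1 <;> by_cases h3 : ret G o ω x <;>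
          by_cases h4 : ret G o ω y <;> simp [h2, h3, h4, eq_comm] 
      · simp [h1]
    simp only [this]
    rw [Finset.sum_ite_eq]; simp
  have j3 : ∀ x y z, J3 G o x y z ω = ∑ c, i c x * i c y * i c z := by
    intro x y z
    have : ∀ c, i c x * i c y * i c z = if (ω y).1 = c then J3 G o x y z ω else 0 := by
      intro c
      simp only [i, J3]
      by_cases h1 : (ω y).1 = c
      · subst h1
        by_cases h2 : (ω x).1 = (ω y).1 <;> by_cases h3 : ret G o ω x <;>
          by_cases h4 : ret G o ω y <;> by_cases h5 : ret G o ω z <;>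
          by_cases h6 : (ω z).1 = (ω y).1 <;> simp [h2, h3, h4, h5, h6] 
      · simp [h1]
    simp only [this]
    rw [Finset.sum_ite_eq]; simp
  have s2 : ∑ x ∈ N, ∑ y ∈ N.erase x, J2 G o x y ω =
      ∑ c, (#(M G o v ω c) : ℝ) * (#(M G o v ω c) - 1) := by
    simp only [← e2, j2]
    rw [Finset.sum_comm]
    refine Finset.sum_congr rfl fun x _ => ?_
    rw [Finset.sum_comm]
  have s3 : ∑ x ∈ N, ∑ y ∈ N.erase x, ∑ z ∈ (N.erase x).erase y, J3 G o x y z ω =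
      ∑ c, (#(M G o v ω c) : ℝ) * (#(M G o v ω c) - 1) * (#(M G o v ω c) - 2) := by
    simp only [← e3, j3]
    rw [Finset.sum_comm]
    refine Finset.sum_congr rfl fun x _ => ?_
    rw [Finset.sum_comm]
    refine Finset.sum_congr rfl fun y _ => ?_
    rw [Finset.sum_comm]
  rw [s2, s3, Finset.mul_sum, Finset.mul_sum, ← Finset.sum_sub_distrib]
  unfold F
  refine Finset.sum_le_sum fun c _ => ?_
  have := h_bound #(M G o v ω c)
  linarith

/-- non-adjacency indicator -/
def Bd (x y : V) : ℝ := if x ≠ y ∧ ¬ G.Adj x y then 1 else 0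

lemma Bd_nonneg (x y : V) : 0 ≤ Bd G x y := by unfold Bd; split_ifs <;> norm_num
lemma Bd_le (x y : V) : Bd G x y ≤ 1 := by unfold Bd; split_ifs <;> norm_num
lemma Bd_sq (x y : V) : Bd G x y ^ 2 = Bd G x y := by unfold Bd; split_ifs <;> norm_num

noncomputable def Q (v : V) : ℝ := ∑ x ∈ G.neighborFinset v, ∑ y ∈ G.neighborFinset v, Bd G x y

noncomputable def T3 (v : V) : ℝ := ∑ x ∈ G.neighborFinset v, ∑ y ∈ G.neighborFinset v,
  ∑ z ∈ G.neighborFinset v, Bd G x y * (Bd G x z * Bd G y z)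

lemma T3_sq (v : V) : T3 G v ^ 2 ≤ Q G v ^ 3 := by
  set N := G.neighborFinset v with hN
  have h1 : T3 G v = ∑ p ∈ N ×ˢ N, Bd G p.1 p.2 * ∑ z ∈ N, Bd G p.1 z * Bd G p.2 z := by
    unfold T3
    rw [Finset.sum_product]
    simp only [Finset.mul_sum, ← hN]
  have hQ : Q G v = ∑ p ∈ N ×ˢ N, Bd G p.1 p.2 := by
    unfold Q; rw [Finset.sum_product]
  have h2 : ∑ p ∈ N ×ˢ N, (∑ z ∈ N, Bd G p.1 z * Bd G p.2 z) ^ 2 ≤ Q G v ^ 2 := by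
    calc _ ≤ ∑ p ∈ N ×ˢ N, (∑ z ∈ N, Bd G p.1 z) * (∑ w ∈ N, Bd G p.2 w) := by
          refine Finset.sum_le_sum fun p _ => ?_
          rw [sq]
          refine mul_le_mul ?_ ?_ ?_ ?_
          · refine Finset.sum_le_sum fun z _ => ?_
            exact mul_le_of_le_one_right (Bd_nonneg G _ _) (Bd_le G _ _)
          · refine Finset.sum_le_sum fun z _ => ?_
            exact mul_le_of_le_one_left (Bd_nonneg G _ _) (Bd_le G _ _)
          · exact Finset.sum_nonneg fun z _ => mul_nonneg (Bd_nonneg G _ _) (Bd_nonneg G _ _)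
          · exact Finset.sum_nonneg fun z _ => (Bd_nonneg G _ _)
      _ = Q G v ^ 2 := by
          rw [Finset.sum_product, sq]
          unfold Q
          rw [Finset.sum_mul_sum]
  have hQ0 : 0 ≤ Q G v := by
    rw [hQ]; exact Finset.sum_nonneg fun p _ => Bd_nonneg G _ _
  rw [h1]
  refine (Finset.sum_mul_sq_le_sq_mul_sq _ _ _).trans ?_
  simp only [Bd_sq]
  rw [← hQ]
  calc _ ≤ Q G v * Q G v ^ 2 := by gcongr
    _ = _ := by ring

lemma Q_eq (r : ℕ) (hreg : ∀ v, G.degree v = r) (v : V) :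
    Q G v = (r : ℝ) ^ 2 - r - 2 * ((G.induce (G.neighborSet v)).edgeSet.ncard : ℝ) := by
  classical
  set N := G.neighborFinset v with hN
  have hNr : #N = r := by rw [hN, G.card_neighborFinset_eq_degree, hreg]
  have h1 : ∑ x ∈ N, ∑ y ∈ N, (if G.Adj x y then 1 else 0) =
      2 * (G.induce (G.neighborSet v)).edgeSet.ncard := by
    have e : (G.induce (G.neighborSet v)).edgeSet.ncard =
        #(G.induce (G.neighborSet v)).edgeFinset := by
      rw [Set.ncard_eq_toFinset_card']; rfl
    rw [e, ← SimpleGraph.sum_degrees_eq_twice_card_edges]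
    have e2 : ∀ x : G.neighborSet v, (G.induce (G.neighborSet v)).degree x =
        ∑ y ∈ N, if G.Adj x y then 1 else 0 := by
      intro x
      rw [← SimpleGraph.card_neighborFinset_eq_degree, ← Finset.sum_filter,
        ← Finset.card_eq_sum_ones]
      refine Finset.card_bij (fun a _ => (a : V)) ?_ ?_ ?_
      · intro a ha
        simp only [SimpleGraph.mem_neighborFinset, SimpleGraph.comap_adj] at ha
        simp only [Finset.mem_filter, hN, SimpleGraph.mem_neighborFinset]
        exact ⟨a.2, ha⟩
      · intro a _ b _ h; exact Subtype.ext h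
      · intro b hb
        simp only [Finset.mem_filter, hN, SimpleGraph.mem_neighborFinset] at hb
        exact ⟨⟨b, hb.1⟩, by simpa using hb.2, rfl⟩
    simp only [e2]
    symm
    exact (Finset.sum_subtype N (p := fun x => x ∈ G.neighborSet v) (by simp [hN])
      (fun x => ∑ y ∈ N, if G.Adj x y then 1 else 0)).symm
  have h2 : ∀ x ∈ N, ∑ y ∈ N, (Bd G x y + (if G.Adj x y then 1 else 0)) = (r : ℝ) - 1 := by
    intro x hx
    have : ∀ y, (Bd G x y + (if G.Adj x y then 1 else 0)) = 1 - if x = y then (1 : ℝ) else 0 := by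
      intro y
      unfold Bd
      by_cases hxy : x = y
      · subst hxy; simp
      · by_cases ha : G.Adj x y <;> simp [hxy, ha]
    simp only [this]
    rw [Finset.sum_sub_distrib, Finset.sum_ite_eq, if_pos hx]
    simp [hNr]
  have h3 := Finset.sum_congr rfl h2
  simp only [Finset.sum_add_distrib, Finset.sum_const, hNr, nsmul_eq_mul] at h3
  have h1' : ∑ x ∈ N, ∑ y ∈ N, (if G.Adj x y then (1 : ℝ) else 0) =
      2 * ((G.induce (G.neighborSet v)).edgeSet.ncard : ℝ) := by exact_mod_cast h1
  unfold Q
  rw [← h1']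
  linarith

lemma E_F_ge (ho : ∀ x u, x ≠ u → o x u = !o u x) (hk : 0 < k) (r : ℕ)
    (hreg : ∀ v, G.degree v = r) (v : V) :
    1 / 2 * (Q G v * (1 / k * (1 - 1 / (2 * k) : ℝ) ^ (2 * r))) -
    1 / 6 * (T3 G v * (1 / k * (1 / k) * Real.exp (-(7 * r / (8 * k))))) ≤
      E (F (k := k) G o v) := by
  classical
  have : Nonempty (Fin k) := ⟨⟨0, hk⟩⟩
  set N := G.neighborFinset v with hN
  set l : ℝ := 1 / k * (1 - 1 / (2 * k) : ℝ) ^ (2 * r) with hl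
  set u : ℝ := 1 / k * (1 / k) * Real.exp (-(7 * r / (8 * k))) with hu
  have hu0 : 0 ≤ u := by positivity
  have hE := E_mono (F_lower (k := k) G o v)
  rw [E_sub, E_const_mul, E_const_mul, E_sum, E_sum] at hE
  have p2 : Q G v * l ≤ ∑ x ∈ N, E (fun ω => ∑ y ∈ N.erase x, J2 (k := k) G o x y ω) := by
    unfold Q
    rw [Finset.sum_mul]
    refine Finset.sum_le_sum fun x hx => ?_
    rw [E_sum, Finset.sum_mul, ← Finset.sum_erase_add _ _ hx]
    have : Bd G x x = 0 := by simp [Bd]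
    rw [this, zero_mul, add_zero]
    refine Finset.sum_le_sum fun y hy => ?_
    have hxy : x ≠ y := (Finset.ne_of_mem_erase hy).symm
    unfold Bd
    by_cases ha : G.Adj x y
    · rw [if_neg (by tauto), zero_mul, ← E_const (V := V) (α := Fin k × (V → Bool)) 0]
      refine E_mono fun ω => ?_
      unfold J2; split_ifs <;> norm_num
    · rw [if_pos ⟨hxy, ha⟩, one_mul]
      exact E_J2_ge G o hk r hreg x y hxy ha
  have p3 : ∑ x ∈ N, E (fun ω => ∑ y ∈ N.erase x, ∑ z ∈ (N.erase x).erase y,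
      J3 (k := k) G o x y z ω) ≤ T3 G v * u := by
    unfold T3
    rw [Finset.sum_mul]
    refine Finset.sum_le_sum fun x hx => ?_
    rw [E_sum, Finset.sum_mul]
    have hpos : ∀ y z, 0 ≤ Bd G x y * (Bd G x z * Bd G y z) * u := fun y z =>
      mul_nonneg (mul_nonneg (Bd_nonneg G _ _) (mul_nonneg (Bd_nonneg G _ _) (Bd_nonneg G _ _))) hu0
    refine le_trans (Finset.sum_le_sum fun y hy => ?_)
      (Finset.sum_le_sum_of_subset_of_nonneg (Finset.erase_subset x N) fun y _ _ => ?_)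
    · rw [E_sum, Finset.sum_mul]
      refine le_trans (Finset.sum_le_sum fun z hz => ?_)
        (Finset.sum_le_sum_of_subset_of_nonneg ((Finset.erase_subset _ _).trans
          (Finset.erase_subset x N)) fun z _ _ => hpos y z)
      have hxy : x ≠ y := (Finset.ne_of_mem_erase hy).symm
      have hzy : z ≠ y := Finset.ne_of_mem_erase hz
      have hzx : z ≠ x := Finset.ne_of_mem_erase (Finset.mem_of_mem_erase hz)
      by_cases hind : ¬ G.Adj x y ∧ ¬ G.Adj x z ∧ ¬ G.Adj y z
      · obtain ⟨a1, a2, a3⟩ := hind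
        have : Bd G x y * (Bd G x z * Bd G y z) = 1 := by
          unfold Bd
          rw [if_pos ⟨hxy, a1⟩, if_pos ⟨hzx.symm, a2⟩, if_pos ⟨hzy.symm, a3⟩]; norm_num
        rw [this, one_mul]
        exact E_J3_le G o hk r hreg x y z hxy hzx hzy a1 a2 a3
      · have : J3 (k := k) G o x y z = fun _ => 0 := by
          funext ω
          unfold J3
          rw [if_neg]
          rintro ⟨⟨c1, c2⟩, r1, r2, r3⟩
          apply hind
          refine ⟨fun h => ret_adj G o ho h c1 r1 r2, fun h => ret_adj G o ho h (c1.trans c2.symm) r1 r3,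
            fun h => ret_adj G o ho h c2.symm r2 r3⟩
        rw [this, E_const]
        exact hpos y z
    · rw [Finset.sum_mul]
      exact Finset.sum_nonneg fun z _ => hpos y z
  linarith

end bounds

section regularize

def dbl {V : Type} (G : SimpleGraph V) (r : ℕ) : SimpleGraph (V × Bool) where
  Adj x y := (x.2 = y.2 ∧ G.Adj x.1 y.1) ∨ (x.2 ≠ y.2 ∧ x.1 = y.1 ∧ (G.neighborSet x.1).ncard < r)
  symm := by
    constructor
    rintro x y (⟨h, h'⟩ | ⟨h, h', h''⟩)
    · exact Or.inl ⟨h.symm, h'.symm⟩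
    · exact Or.inr ⟨h.symm, h'.symm, h' ▸ h''⟩
  loopless := by
    constructor
    rintro x (⟨h, h'⟩ | ⟨h, h', h''⟩)
    · exact G.loopless.irrefl _ h'
    · exact h rfl

lemma dbl_nbr1 {V : Type} [Fintype V] (G : SimpleGraph V) (r : ℕ) (v : V) (i : Bool)
    (h : (G.neighborSet v).ncard < r) :
    ((dbl G r).neighborSet (v, i)).ncard = (G.neighborSet v).ncard + 1 := by
  have : (dbl G r).neighborSet (v, i) = insert (v, !i) ((fun w => (w, i)) '' G.neighborSet v) := by
    ext ⟨w, j⟩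
    simp only [SimpleGraph.mem_neighborSet, dbl, Set.mem_insert_iff, Set.mem_image, Prod.mk.injEq]
    cases i <;> cases j <;> simp [h, eq_comm]
  rw [this, Set.ncard_insert_of_notMem (by simp) (Set.toFinite _),
    Set.ncard_image_of_injective _ (fun a b hab => by simpa using hab)]

lemma dbl_nbr2 {V : Type} [Fintype V] (G : SimpleGraph V) (r : ℕ) (v : V) (i : Bool)
    (h : ¬ (G.neighborSet v).ncard < r) :
    ((dbl G r).neighborSet (v, i)).ncard = (G.neighborSet v).ncard := by
  have : (dbl G r).neighborSet (v, i) = ((fun w => (w, i)) '' G.neighborSet v) := by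
    ext ⟨w, j⟩
    simp only [SimpleGraph.mem_neighborSet, dbl, Set.mem_image, Prod.mk.injEq]
    cases i <;> cases j <;> simp [h]
  rw [this, Set.ncard_image_of_injective _ (fun a b hab => by simpa using hab)]

lemma dbl_edges {V : Type} [Fintype V] (G : SimpleGraph V) (r : ℕ) (v : V) (i : Bool) :
    (((dbl G r).induce ((dbl G r).neighborSet (v, i))).edgeSet).ncard ≤
      ((G.induce (G.neighborSet v)).edgeSet).ncard := by
  let f : G.neighborSet v → (dbl G r).neighborSet (v, i) := fun w => ⟨(w.1, i), Or.inl ⟨rfl, w.2⟩⟩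
  refine le_trans (Set.ncard_le_ncard (t := Sym2.map f '' (G.induce (G.neighborSet v)).edgeSet) ?_
    (Set.toFinite _)) (Set.ncard_image_le (Set.toFinite _))
  intro e
  induction e using Sym2.ind with
  | _ x y =>
    obtain ⟨⟨x, a⟩, hx⟩ := x
    obtain ⟨⟨y, b⟩, hy⟩ := y
    intro h
    have h : (dbl G r).Adj (x, a) (y, b) := h
    have key : a = i ∧ b = i ∧ G.Adj x y ∧ G.Adj v x ∧ G.Adj v y := by
      rcases hx with ⟨h1, h2⟩ | ⟨h1, h2, -⟩ <;> rcases hy with ⟨h3, h4⟩ | ⟨h3, h4, -⟩ <;>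
        rcases h with ⟨h5, h6⟩ | ⟨h5, h6, -⟩ <;> simp only at *
      · exact ⟨h1.symm, h3.symm, h6, h2, h4⟩
      · exact absurd (h1.symm.trans h3) h5
      · exact absurd (h1.trans h5) h3
      · subst h4; subst h6; exact absurd h2 (G.loopless.irrefl _)
      · exact absurd (h3.trans h5.symm) h1
      · subst h2; subst h6; exact absurd h4 (G.loopless.irrefl _)
      · subst h2; subst h4; exact absurd h6 (G.loopless.irrefl _)
      · exfalso; revert h1 h3 h5; cases a <;> cases b <;> cases i <;> simp
    obtain ⟨rfl, rfl, h1, h2, h3⟩ := key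
    exact ⟨s(⟨x, h2⟩, ⟨y, h3⟩), h1, rfl⟩

lemma regularize (r : ℕ) (B : ℝ) (m : ℕ) : ∀ (V : Type) [Fintype V] (G : SimpleGraph V),
    (∀ v, (G.neighborSet v).ncard ≤ r) → (∀ v, r ≤ (G.neighborSet v).ncard + m) →
    (∀ v : V, (((G.induce (G.neighborSet v)).edgeSet.ncard : ℝ)) ≤ B) →
    ∃ (W : Type) (_ : Fintype W) (H : SimpleGraph W), (∀ v, (H.neighborSet v).ncard = r) ∧
    (∀ v : W, (((H.induce (H.neighborSet v)).edgeSet.ncard : ℝ)) ≤ B) ∧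
    ∀ n, H.Colorable n → G.Colorable n := by
  induction m with
  | zero =>
    intro V _ G h1 h2 h3
    exact ⟨V, inferInstance, G, fun v => le_antisymm (h1 v) (h2 v), h3, fun n h => h⟩
  | succ m ih =>
    intro V _ G h1 h2 h3
    have e1 : ∀ x, ((dbl G r).neighborSet x).ncard ≤ r := by
      rintro ⟨v, i⟩
      by_cases h : (G.neighborSet v).ncard < r
      · rw [dbl_nbr1 G r v i h]; exact h
      · rw [dbl_nbr2 G r v i h]; exact h1 v
    have e2 : ∀ x, r ≤ ((dbl G r).neighborSet x).ncard + m := by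
      rintro ⟨v, i⟩
      by_cases h : (G.neighborSet v).ncard < r
      · rw [dbl_nbr1 G r v i h]; have := h2 v; omega
      · rw [dbl_nbr2 G r v i h]; omega
    obtain ⟨W, i, H, a, b, c⟩ := ih (V × Bool) (dbl G r) e1 e2 (by
      rintro ⟨v, i⟩
      exact le_trans (by exact_mod_cast dbl_edges G r v i) (h3 v))
    refine ⟨W, i, H, a, b, fun n hn => ?_⟩
    have f : G →g dbl G r := ⟨fun v => (v, true), fun h => Or.inl ⟨rfl, h⟩⟩
    exact (c n hn).of_hom f

end regularize

section regcase
variable {V : Type} [Fintype V] [DecidableEq V] (G : SimpleGraph V) [DecidableRel G.Adj]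

lemma supp_card (r : ℕ) (hreg : ∀ v, G.degree v = r) (v : V) : #(supp G v) ≤ r + r ^ 2 := by
  unfold supp
  refine (card_union_le _ _).trans ?_
  have h1 : #(G.neighborFinset v) = r := by simpa using hreg v
  have h2 : #((G.neighborFinset v).biUnion fun x => G.neighborFinset x) ≤ r * r := by
    refine (card_biUnion_le_card_mul _ _ r ?_).trans (by rw [h1])
    intro x _; simp [hreg]
  nlinarith

lemma supp_symm (v w : V) (h : v ∈ supp G w) : w ∈ supp G v := by
  simp only [supp, mem_union, mem_biUnion, SimpleGraph.mem_neighborFinset] at h ⊢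
  rcases h with h | ⟨a, h, h'⟩
  · exact Or.inl h.symm
  · exact Or.inr ⟨a, h'.symm, h.symm⟩

lemma supp_count (r : ℕ) (hreg : ∀ v, G.degree v = r) (v : V) :
    #{w | ¬ Disjoint (supp G v) (supp G w)} ≤ (r + r ^ 2) ^ 2 := by
  have : ({w | ¬ Disjoint (supp G v) (supp G w)} : Finset V) ⊆ (supp G v).biUnion (supp G) := by
    intro w hw
    simp only [mem_filter, mem_univ, true_and, Finset.not_disjoint_iff] at hw
    obtain ⟨a, h1, h2⟩ := hw
    exact mem_biUnion.2 ⟨a, h1, supp_symm G _ _ h2⟩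
  refine (card_le_card this).trans ?_
  refine (card_biUnion_le_card_mul _ _ (r + r^2) (fun x _ => supp_card G r hreg x)).trans ?_
  have := supp_card G r hreg v
  nlinarith

lemma reg_color {k : ℕ} (hk : 0 < k) (r : ℕ) (hr : 1 ≤ r) (hreg : ∀ v, G.degree v = r)
    (lam T m : ℝ) (h0 : 0 ≤ lam) (h1 : lam ≤ 1 / 4)
    (hm : ∀ (o : V → V → Bool), (∀ x u, x ≠ u → o x u = !o u x) → ∀ v, m ≤ E (F (k := k) G o v))
    (hT : (r : ℝ) + 1 ≤ k + T)
    (hp : 4 * Real.exp (4*lam^2*(4*r + 4*(r:ℝ)^2/k) + lam*(T - m)) * ((r:ℝ) + (r:ℝ)^2)^2 ≤ 1) :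
    G.Colorable k := by
  classical
  have : Nonempty (Fin k) := ⟨⟨0, hk⟩⟩
  let e := Fintype.equivFin V
  let o : V → V → Bool := fun x u => decide (e x < e u)
  have ho : ∀ x u, x ≠ u → o x u = !o u x := by
    intro x u h
    have h' : e x ≠ e u := fun h'' => h (e.injective h'')
    rcases lt_or_gt_of_ne h' with h'' | h''
    · simp [o, h'', h''.le]
    · simp [o, h'', h''.le]
  set p := Real.exp (4*lam^2*(4*r + 4*(r:ℝ)^2/k) + lam*(T - m)) with hpdef
  have hp0 : 0 < p := Real.exp_pos _
  have hr' : (1:ℝ) ≤ r := by exact_mod_cast hr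
  obtain ⟨ω, hω⟩ := lll (fun v ω => F (k := k) G o v ω < T) (supp G) p ((r + r^2)^2) hp0.le
    (by
      intro v ω ω' h
      have : F G o v ω = F G o v ω' := by
        unfold F
        refine sum_congr rfl fun c _ => ?_
        rw [M_congr_supp G o v ω ω' h c]
      simp only [this])
    (by
      intro v
      have := F_tail G o hk r hreg v lam h0 h1 T
      refine le_trans ?_ (this.trans ?_)
      · refine le_of_eq ?_
        congr 1
      · rw [hpdef]
        apply Real.exp_le_exp.2
        have := mul_le_mul_of_nonneg_left (hm o ho v) h0
        nlinarith)
    (supp_count G r hreg) (by push_cast; exact hp)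
    (by
      have : (1:ℝ) ≤ ((r:ℝ) + (r:ℝ)^2)^2 := by
        have : (1:ℝ) ≤ (r:ℝ) + (r:ℝ)^2 := by nlinarith
        nlinarith
      nlinarith)
  refine final_color G o ho r hreg ω fun v => ?_
  have h2 := not_lt.1 (hω v)
  have h3 : F G o v ω = (FN G o v ω : ℝ) := by unfold F FN; push_cast; rfl
  rw [h3] at h2
  have : (r:ℝ) + 1 ≤ (k:ℝ) + FN G o v ω := by linarith
  have : r + 1 ≤ k + FN G o v ω := by exact_mod_cast this
  omega

end regcase

section analysis
open Filter Topology

lemma cubic_mono (a b t s : ℝ) (ht : 0 ≤ t) (hts : t ≤ s) (hs : s ≤ 1) (hb : 0 ≤ b)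
    (hab : 3 * b ≤ 2 * a) : a * t ^ 2 - b * t ^ 3 ≤ a * s ^ 2 - b * s ^ 3 := by
  have h1 : s ^ 2 + s * t + t ^ 2 ≤ 3 / 2 * (s + t) := by nlinarith
  have h2 : b * (s ^ 2 + s * t + t ^ 2) ≤ a * (s + t) := by
    have := mul_le_mul_of_nonneg_left h1 hb
    have : 3 * b * (s + t) ≤ 2 * a * (s + t) := mul_le_mul_of_nonneg_right hab (by linarith)
    linarith
  have h3 := mul_le_mul_of_nonneg_left h2 (sub_nonneg.2 hts)
  nlinarith

lemma pow_ge (k r : ℕ) (hk : 0 < k) :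
    Real.exp (-(2 * r / (2 * k - 1))) ≤ (1 - 1 / (2 * k) : ℝ) ^ (2 * r) := by
  have hk' : (1:ℝ) ≤ k := by exact_mod_cast hk
  have h1 : Real.exp (-(1 / (2 * k - 1))) ≤ (1 - 1 / (2 * k) : ℝ) := by
    have h2 := Real.add_one_le_exp (1 / (2 * k - 1) : ℝ)
    rw [Real.exp_neg]
    have h3 : (1 - 1 / (2 * k) : ℝ) = (1 / (2 * k - 1) + 1 : ℝ)⁻¹ := by
      have : (2 * k - 1 : ℝ) ≠ 0 := by linarith
      have h5 : (1 / (2 * k - 1) + 1 : ℝ) = 2 * k / (2 * k - 1) := by field_simp; ring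
      rw [h5, inv_div]
      field_simp
    rw [h3]
    have : 0 < (1 / (2 * k - 1) : ℝ) := by apply div_pos <;> linarith
    exact inv_anti₀ (by linarith) h2
  have h4 := pow_le_pow_left₀ (Real.exp_pos _).le h1 (2 * r)
  rw [← Real.exp_nat_mul] at h4
  refine le_trans (le_of_eq ?_) h4
  congr 1
  push_cast
  ring

lemma ab_strict (γ : ℝ) (h0 : 0 < γ) (h1 : γ < 1)
    (h : γ < 1 / (2 * (1 - γ)) * Real.exp (-(1 / (1 - γ)))) :
    3 * (1 / (6 * (1 - γ) ^ 2) * Real.exp (-(7 / (8 * (1 - γ))))) <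
      2 * (1 / (2 * (1 - γ)) * Real.exp (-(1 / (1 - γ)))) := by
  set s := 1 / (1 - γ) with hs
  have hγ : 0 < 1 - γ := by linarith
  have hs0 : 0 < s := by positivity
  have e1 : 1 / (2 * (1 - γ)) = s / 2 := by rw [hs]; field_simp
  have e2 : 1 / (6 * (1 - γ) ^ 2) = s ^ 2 / 6 := by rw [hs]; field_simp
  have e3 : 7 / (8 * (1 - γ)) = 7 * s / 8 := by rw [hs]; field_simp
  rw [e1] at h ⊢
  rw [e2, e3]
  have h2 : s * Real.exp (-s) ≤ Real.exp (-1) := by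
    have := Real.add_one_le_exp (s - 1)
    calc s * Real.exp (-s) ≤ Real.exp (s - 1) * Real.exp (-s) := by gcongr; linarith
      _ = Real.exp (-1) := by rw [← Real.exp_add]; congr 1; ring
  have h3 : Real.exp (-1) ≤ 2 / 5 := by
    rw [Real.exp_neg, inv_le_comm₀ (Real.exp_pos _) (by norm_num)]
    have := Real.exp_one_gt_d9
    norm_num; linarith
  have h4 : γ ≤ 1 / 5 := by linarith
  have h5 : s ≤ 5 / 4 := by
    rw [hs, div_le_div_iff₀ hγ (by norm_num)]; linarith
  have h6 : Real.exp (s / 8) ≤ 4 / 3 := by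
    have := Real.add_one_le_exp (-(s / 8))
    rw [Real.exp_neg] at this
    have h7 : 3 / 4 ≤ (Real.exp (s / 8))⁻¹ := by linarith
    rw [le_inv_comm₀ (by norm_num) (Real.exp_pos _)] at h7
    linarith
  have h8 : Real.exp (-(7 * s / 8)) = Real.exp (-s) * Real.exp (s / 8) := by
    rw [← Real.exp_add]; congr 1; ring
  rw [h8]
  have h9 : s * Real.exp (s / 8) < 2 := by nlinarith [Real.exp_pos (s / 8)]
  have h10 := mul_lt_mul_of_pos_left h9 (mul_pos hs0 (Real.exp_pos (-s)))
  nlinarith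

noncomputable def kk (γ : ℝ) (r : ℕ) : ℕ := ⌊(1 - γ) * (r : ℝ)⌋₊
noncomputable def ua (γ : ℝ) (r : ℕ) : ℝ := (kk γ r : ℝ) / r
noncomputable def fa (u z : ℝ) : ℝ := 1 / (2 * u) * Real.exp (-(2 / (2 * u - z)))
noncomputable def fb (u : ℝ) : ℝ := 1 / (6 * u ^ 2) * Real.exp (-(7 / (8 * u)))

lemma ua_lim (γ : ℝ) (h1 : γ < 1) : Tendsto (ua γ) atTop (𝓝 (1 - γ)) := by
  have := (tendsto_nat_floor_mul_div_atTop (R := ℝ) (a := 1 - γ) (by linarith)).comp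
    (tendsto_natCast_atTop_atTop (R := ℝ))
  exact this

lemma z_lim : Tendsto (fun r : ℕ => (1 : ℝ) / r) atTop (𝓝 0) :=
  tendsto_one_div_atTop_nhds_zero_nat

lemma fa_lim (γ : ℝ) (h1 : γ < 1) : Tendsto (fun r : ℕ => fa (ua γ r) (1 / r)) atTop
    (𝓝 (1 / (2 * (1 - γ)) * Real.exp (-(1 / (1 - γ))))) := by
  have hu := ua_lim γ h1
  have hz := z_lim
  have hγ : 1 - γ ≠ 0 := by linarith
  unfold fa
  refine Tendsto.mul ?_ ?_
  · exact tendsto_const_nhds.div (hu.const_mul 2) (by simpa using hγ)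
  · refine (Real.continuous_exp.tendsto _).comp (Tendsto.neg ?_)
    have := (tendsto_const_nhds (x := (2:ℝ))).div ((hu.const_mul 2).sub hz) (by simpa using hγ)
    have e : 1 / (1 - γ) = 2 / (2 * (1 - γ) - 0) := by rw [sub_zero]; field_simp
    rw [e]
    exact this

lemma fb_lim (γ : ℝ) (h1 : γ < 1) : Tendsto (fun r : ℕ => fb (ua γ r)) atTop
    (𝓝 (1 / (6 * (1 - γ) ^ 2) * Real.exp (-(7 / (8 * (1 - γ)))))) := by
  have hu := ua_lim γ h1
  have hγ : 1 - γ ≠ 0 := by linarith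
  unfold fb
  refine Tendsto.mul ?_ ?_
  · exact tendsto_const_nhds.div ((hu.pow 2).const_mul 6) (by simpa using hγ)
  · refine (Real.continuous_exp.tendsto _).comp (Tendsto.neg ?_)
    exact tendsto_const_nhds.div (hu.const_mul 8) (by simpa using hγ)

lemma tail_lim (c C : ℝ) (hc : 0 < c) :
    ∀ᶠ r : ℕ in atTop, 4 * Real.exp (C - c * r) * ((r:ℝ) + (r:ℝ)^2)^2 ≤ 1 := by
  have h1 : Tendsto (fun r : ℕ => c * (r : ℝ)) atTop atTop :=
    (tendsto_natCast_atTop_atTop (R := ℝ)).const_mul_atTop hc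
  have h2 := ((Real.tendsto_pow_mul_exp_neg_atTop_nhds_zero 4).comp h1).const_mul
    (16 * Real.exp C / c ^ 4)
  rw [mul_zero] at h2
  filter_upwards [h2.eventually_le_const (zero_lt_one), eventually_ge_atTop 1] with r hr hr1
  refine le_trans ?_ hr
  simp only [Function.comp]
  have hr1 : (1:ℝ) ≤ r := by exact_mod_cast hr1
  have e : 16 * Real.exp C / c ^ 4 * ((c * r) ^ 4 * Real.exp (-(c * r))) =
      4 * Real.exp (C - c * r) * (4 * (r:ℝ) ^ 4) := by
    rw [sub_eq_add_neg, Real.exp_add]; field_simp; ring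
  rw [e]
  have : ((r:ℝ) + (r:ℝ)^2)^2 ≤ (2 * (r:ℝ) ^ 2) ^ 2 := by
    apply pow_le_pow_left₀ (by positivity); nlinarith
  have h3 := Real.exp_pos (C - c * r)
  apply mul_le_mul_of_nonneg_left _ (by positivity)
  linarith

lemma mean_ge {V : Type} [Fintype V] [DecidableEq V] (G : SimpleGraph V) [DecidableRel G.Adj]
    (γ δ m : ℝ) (hδ : 0 ≤ δ) (r : ℕ) (hr : 1 ≤ r) (hk : 0 < kk γ r) (hreg : ∀ v, G.degree v = r)
    (he : ∀ v : V, (((G.induce (G.neighborSet v)).edgeSet.ncard : ℝ)) ≤ (1 - δ) * (r.choose 2 : ℝ))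
    (hab : 3 * fb (ua γ r) ≤ 2 * fa (ua γ r) (1 / r))
    (hm : m ≤ fa (ua γ r) (1 / r) * (√(δ * (1 - 1 / r))) ^ 2 -
      fb (ua γ r) * (√(δ * (1 - 1 / r))) ^ 3)
    (o : V → V → Bool) (ho : ∀ x u, x ≠ u → o x u = !o u x) (v : V) :
    m * r ≤ E (F (k := kk γ r) G o v) := by
  have h1 := E_F_ge G o ho hk r hreg v
  refine le_trans ?_ h1
  have h2 := Q_eq G r hreg v
  have h3 := T3_sq G v
  have h4 := he v
  rw [Nat.cast_choose_two] at h4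
  have hr' : (1:ℝ) ≤ r := by exact_mod_cast hr
  have hr0 : (0:ℝ) < r := by linarith
  have hn : (0:ℝ) ≤ ((G.induce (G.neighborSet v)).edgeSet.ncard : ℝ) := Nat.cast_nonneg _
  generalize ((G.induce (G.neighborSet v)).edgeSet.ncard : ℝ) = e at *
  generalize T3 G v = T at *
  have h2' : Q G v ≤ (r:ℝ) ^ 2 := by rw [h2]; nlinarith
  have h2'' : δ * ((r:ℝ) ^ 2 - r) ≤ Q G v := by rw [h2]; nlinarith
  generalize Q G v = q at *
  have hp := pow_ge (kk γ r) r hk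
  have hu : ua γ r = (kk γ r : ℝ) / r := rfl
  generalize ua γ r = u at *
  generalize kk γ r = k at *
  have hk1 : (1:ℝ) ≤ k := by exact_mod_cast hk
  have hq0 : 0 ≤ q := le_trans (mul_nonneg hδ (by nlinarith)) h2''
  set t := √q / r with ht
  have hqt : q = r ^ 2 * t ^ 2 := by
    rw [ht, div_pow, Real.sq_sqrt hq0]; field_simp
  have ht0 : 0 ≤ t := by positivity
  have hTt : T ≤ r ^ 3 * t ^ 3 := by
    apply le_of_sq_le_sq _ (by positivity)
    calc T ^ 2 ≤ q ^ 3 := h3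
      _ = _ := by rw [hqt]; ring
  have ht1 : t ≤ 1 := by
    apply le_of_sq_le_sq _ zero_le_one
    have : (r:ℝ) ^ 2 * t ^ 2 ≤ r ^ 2 * 1 := by rw [← hqt]; linarith
    have := le_of_mul_le_mul_left this (by positivity)
    simpa using this
  have hst : √(δ * (1 - 1 / r)) ≤ t := by
    apply Real.sqrt_le_iff.2 ⟨ht0, ?_⟩
    have : (r:ℝ) ^ 2 * (δ * (1 - 1 / r)) ≤ r ^ 2 * t ^ 2 := by
      rw [← hqt]; refine le_trans (le_of_eq ?_) h2''; field_simp
    exact le_of_mul_le_mul_left this (by positivity)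
  have hfb : 0 ≤ fb u := by unfold fb; positivity
  have hmono := cubic_mono (fa u (1/r)) (fb u) _ t (Real.sqrt_nonneg _) hst ht1 hfb hab
  have hmain : m * r ≤ (fa u (1/r) * t ^ 2 - fb u * t ^ 3) * r :=
    mul_le_mul_of_nonneg_right (hm.trans hmono) hr0.le
  refine hmain.trans ?_
  have ea : fa u (1/r) * t ^ 2 * r ≤ 1/2*(q*(1/k*(1 - 1/(2*k):ℝ)^(2*r))) := by
    have e1 : fa u (1/r) = r / (2 * k) * Real.exp (-(2 * r / (2 * k - 1))) := by
      unfold fa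
      have h5 : (2 * (k:ℝ) - 1) ≠ 0 := by linarith
      have h6 : 2 * (k / r : ℝ) - 1 / r = (2 * k - 1) / r := by ring
      rw [hu, h6]
      congr 1
      · field_simp
      · congr 2; field_simp
    rw [e1]
    calc _ = 1/2*(q*(1/k*Real.exp (-(2 * r / (2 * k - 1))))) := by rw [hqt]; field_simp
      _ ≤ _ := by gcongr
  have eb : 1/6*(T*(1/k*(1/k)*Real.exp (-(7*r/(8*k))))) ≤ fb u * t ^ 3 * r := by
    have e1 : fb u = r ^ 2 / (6 * k ^ 2) * Real.exp (-(7*r/(8*k))) := by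
      unfold fb
      rw [hu]
      congr 1
      · field_simp
      · congr 2; field_simp
    rw [e1]
    calc _ ≤ 1/6*(r ^ 3 * t ^ 3*(1/k*(1/k)*Real.exp (-(7*r/(8*k))))) := by gcongr
      _ = _ := by field_simp
  linarith

end analysis

lemma ncard_nbr {V : Type} [Fintype V] [DecidableEq V] (G : SimpleGraph V) [DecidableRel G.Adj]
    (v : V) : (G.neighborSet v).ncard = G.degree v := by
  have h : (G.neighborSet v) = ((G.neighborFinset v : Finset V) : Set V) := by ext; simp
  have h2 := congrArg Set.ncard h
  rw [Set.ncard_coe_finset] at h2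
  exact h2

end CL

open Filter Topology CL
theorem coloring_lemma (γ δ : ℝ) (hγ : γ ∈ Set.Ioo (0 : ℝ) 1) (hδ : δ ∈ Set.Ioo (0 : ℝ) 1)
    (hcond : γ < δ / (2 * (1 - γ)) * Real.exp (-(1 / (1 - γ))) -
      δ ^ ((3 : ℝ) / 2) / (6 * (1 - γ) ^ 2) * Real.exp (-(7 / (8 * (1 - γ))))) :
    ∃ R : ℕ, ∀ r : ℕ, R ≤ r →
      ∀ (V : Type) [Fintype V] [DecidableEq V] (G : SimpleGraph V) [DecidableRel G.Adj],
        G.maxDegree ≤ r →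
        (∀ v : V, (((G.induce (G.neighborSet v)).edgeSet.ncard : ℝ)) ≤
          (1 - δ) * (r.choose 2 : ℝ)) →
        ∃ n : ℕ, (n : ℝ) ≤ (1 - γ) * (r : ℝ) ∧ G.Colorable n := by
  obtain ⟨hγ0, hγ1⟩ := hγ
  obtain ⟨hδ0, hδ1⟩ := hδ
  have hγ' : 0 < 1 - γ := by linarith
  set a := 1 / (2 * (1 - γ)) * Real.exp (-(1 / (1 - γ))) with ha
  set b := 1 / (6 * (1 - γ) ^ 2) * Real.exp (-(7 / (8 * (1 - γ)))) with hb
  have ha0 : 0 < a := by positivity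
  have hb0 : 0 < b := by positivity
  have hd3 : δ ^ ((3 : ℝ) / 2) = √δ ^ 3 := by
    rw [Real.sqrt_eq_rpow, ← Real.rpow_natCast, ← Real.rpow_mul hδ0.le]; norm_num
  have hcond' : γ < a * √δ ^ 2 - b * √δ ^ 3 := by
    refine lt_of_lt_of_eq hcond ?_
    rw [hd3, Real.sq_sqrt hδ0.le, ha, hb]; ring
  have hγa : γ < a := by
    rw [Real.sq_sqrt hδ0.le] at hcond'
    have : 0 ≤ b * √δ ^ 3 := by positivity
    nlinarith
  have hab := ab_strict γ hγ0 hγ1 hγa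
  have hfa := fa_lim γ hγ1
  have hfb := fb_lim γ hγ1
  have hs : Tendsto (fun r : ℕ => √(δ * (1 - 1 / (r:ℝ)))) atTop (𝓝 √δ) := by
    have := ((z_lim.const_sub 1).const_mul δ).sqrt
    simpa using this
  have hL := (hfa.mul (hs.pow 2)).sub (hfb.mul (hs.pow 3))
  obtain ⟨ε, hε0, hε⟩ : ∃ ε : ℝ, 0 < ε ∧ γ + 2 * ε < a * √δ ^ 2 - b * √δ ^ 3 :=
    ⟨(a * √δ ^ 2 - b * √δ ^ 3 - γ) / 4, by linarith, by linarith⟩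
  set K : ℝ := 4 + 8 / (1 - γ) with hK
  have hK0 : 0 < K := by positivity
  set lam : ℝ := min (1 / 4) (ε / (4 * K)) with hlam
  have hl0 : 0 < lam := by apply lt_min <;> positivity
  have hl1 : lam ≤ 1 / 4 := min_le_left _ _
  have hl2 : 4 * K * lam ≤ ε := by
    have : lam ≤ ε / (4 * K) := min_le_right _ _
    rw [le_div_iff₀ (by positivity)] at this; linarith
  have ev : ∀ᶠ r : ℕ in atTop, 1 ≤ r ∧
      γ + 2 * ε < fa (ua γ r) (1 / r) * (√(δ * (1 - 1 / r))) ^ 2 -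
        fb (ua γ r) * (√(δ * (1 - 1 / r))) ^ 3 ∧
      3 * fb (ua γ r) < 2 * fa (ua γ r) (1 / r) ∧
      (1 - γ) / 2 < ua γ r ∧
      4 * Real.exp (2 * lam - lam * ε * r) * ((r:ℝ) + (r:ℝ)^2)^2 ≤ 1 := by
    filter_upwards [eventually_ge_atTop 1, hL.eventually_const_lt hε,
      (hfb.const_mul 3).eventually_lt (hfa.const_mul 2) hab,
      (ua_lim γ hγ1).eventually_const_lt (show (1 - γ) / 2 < 1 - γ by linarith),
      tail_lim (lam * ε) (2 * lam) (by positivity)] with r h1 h2 h3 h4 h5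
    exact ⟨h1, h2, h3, h4, h5⟩
  obtain ⟨R, hR⟩ := eventually_atTop.1 ev
  refine ⟨R, fun r hr V _ _ G _ hmax hedge => ?_⟩
  obtain ⟨hr1, hm, hab', hu, htail⟩ := hR r hr
  have hr1' : (1:ℝ) ≤ r := by exact_mod_cast hr1
  have hr0 : (0:ℝ) < r := by linarith
  have hkpos : (0:ℝ) < kk γ r := by
    have : 0 < ua γ r := by linarith
    unfold ua at this
    by_contra hneg
    have h0 : (kk γ r : ℝ) = 0 := le_antisymm (not_lt.1 hneg) (Nat.cast_nonneg _)
    rw [h0] at this; simp at this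
  have hk : 0 < kk γ r := by exact_mod_cast hkpos
  refine ⟨kk γ r, Nat.floor_le (by positivity), ?_⟩
  have hnc : ∀ v, (G.neighborSet v).ncard = G.degree v := by
    intro v
    exact CL.ncard_nbr G v
  obtain ⟨W, iW, H, hH1, hH2, hH3⟩ := regularize r _ r V G
    (fun v => by rw [hnc]; exact (G.degree_le_maxDegree v).trans hmax) (fun v => by omega) hedge
  apply hH3
  classical
  have hreg : ∀ v, H.degree v = r := by
    intro v
    rw [← hH1 v]; exact (CL.ncard_nbr H v).symm
  refine reg_color H hk r hr1 hreg lam (γ * r + 2) ((γ + 2 * ε) * r) hl0.le hl1 ?_ ?_ ?_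
  · intro o ho v
    exact mean_ge H γ δ _ hδ0.le r hr1 hk hreg hH2 hab'.le hm.le o ho v
  · have := Nat.lt_floor_add_one ((1 - γ) * (r:ℝ))
    unfold kk
    linarith
  · refine le_trans ?_ htail
    gcongr
    have h1 : (r:ℝ) ^ 2 / kk γ r ≤ 2 / (1 - γ) * r := by
      unfold ua at hu
      rw [lt_div_iff₀ hr0] at hu
      rw [div_le_iff₀ hkpos, div_mul_eq_mul_div, div_mul_eq_mul_div, le_div_iff₀ hγ']
      nlinarith
    have h2 : 4 * (r:ℝ) + 4 * (r:ℝ) ^ 2 / kk γ r ≤ K * r := by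
      rw [hK, mul_div_assoc]
      have : (4 + 8 / (1 - γ)) * (r:ℝ) = 4 * r + 4 * (2 / (1 - γ) * r) := by ring
      linarith
    have h3 : 4 * lam ^ 2 * (4 * (r:ℝ) + 4 * (r:ℝ) ^ 2 / kk γ r) ≤ 4 * lam ^ 2 * (K * r) := by
      gcongr
    have h4 : 4 * lam ^ 2 * (K * r) ≤ lam * ε * r := by
      have := mul_le_mul_of_nonneg_right hl2 (mul_nonneg hl0.le hr0.le)
      nlinarith
    linarith
end

section
/- Let γ ∈ (0,1). There is an R so that for every r-regular simple graph G with r ≥ R and every vertex u of G, when the random coloring procedure is performed with C = ⌈(1−γ)r⌉ colors, the random variables P_u and T_u satisfy: P[|P_u − E[P_u]| ≥ √r·(log r)³] ≤ r^{−(1/2)·log log r} and P[|T_u − E[T_u]| ≥ √r·(log r)⁴] ≤ r^{−(1/2)·log log r}. -/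
section ColoringProcedure

variable {V : Type} [Fintype V] [LinearOrder V] (G : SimpleGraph V) [DecidableRel G.Adj]

/-- The sample space of the random coloring procedure with `C` colors: a color for every
vertex together with an orientation (a Boolean) for every edge. -/
abbrev ProcSpace (C : ℕ) := (V → Fin C) × (G.edgeSet → Bool)

/-- The larger endvertex of an edge (used to decode the Boolean orientation). -/
def sym2max (e : Sym2 V) : V := Sym2.lift ⟨fun a b => max a b, fun a b => max_comm a b⟩ e

/-- The edge `e` points towards its endvertex `v` under the orientation `σ`:
the Boolean `σ e` is `true` exactly if `e` points towards its larger endvertex. -/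
def pointsTo (σ : G.edgeSet → Bool) (e : G.edgeSet) (v : V) : Prop :=
  σ e = decide (v = sym2max (e : Sym2 V))

/-- The vertex `v` stays colored after the uncoloring step: no neighbor of `v` received
the same color with the connecting edge pointing towards `v`. -/
def keepsColor {C : ℕ} (ω : ProcSpace G C) (v : V) : Prop :=
  ∀ w, (h : G.Adj v w) → ω.1 w = ω.1 v →
    ¬ pointsTo G ω.2 ⟨s(v, w), G.mem_edgeSet.mpr h⟩ v

/-- `P_u`: the number of pairs of distinct non-adjacent neighbors of `u` that are both
still colored after the uncoloring step and have the same color. -/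
noncomputable def pairsSaved {C : ℕ} (u : V) (ω : ProcSpace G C) : ℕ :=
  {p : Finset V | ∃ x y, x ≠ y ∧ p = {x, y} ∧ G.Adj u x ∧ G.Adj u y ∧ ¬ G.Adj x y ∧
    ω.1 x = ω.1 y ∧ keepsColor G ω x ∧ keepsColor G ω y}.ncard

/-- `T_u`: the number of triples of distinct pairwise non-adjacent neighbors of `u` that
are all still colored after the uncoloring step and share the same color. -/
noncomputable def triplesSaved {C : ℕ} (u : V) (ω : ProcSpace G C) : ℕ :=
  {p : Finset V | ∃ x y z, x ≠ y ∧ x ≠ z ∧ y ≠ z ∧ p = {x, y, z} ∧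
    G.Adj u x ∧ G.Adj u y ∧ G.Adj u z ∧ ¬ G.Adj x y ∧ ¬ G.Adj x z ∧ ¬ G.Adj y z ∧
    ω.1 x = ω.1 y ∧ ω.1 y = ω.1 z ∧
    keepsColor G ω x ∧ keepsColor G ω y ∧ keepsColor G ω z}.ncard

/-- The probability of an event under the uniform distribution on the sample space. -/
noncomputable def procProb (C : ℕ) (S : Set (ProcSpace G C)) : ℝ :=
  (S.ncard : ℝ) / (Fintype.card (ProcSpace G C) : ℝ)

/-- The expectation of a random variable under the uniform distribution on the sample
space. -/
noncomputable def procExp (C : ℕ) (f : ProcSpace G C → ℝ) : ℝ :=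
  (∑ ω : ProcSpace G C, f ω) / (Fintype.card (ProcSpace G C) : ℝ)

end ColoringProcedure

section Abstract
open Finset BigOperators

lemma aux_sq_expect {Ω : Type*} [Fintype Ω] [Nonempty Ω] (g : Ω → ℝ) :
    (𝔼 c, g c) ^ 2 ≤ 𝔼 c, g c ^ 2 := by
  rw [Fintype.expect_eq_sum_div_card, Fintype.expect_eq_sum_div_card]
  have h : (0:ℝ) < Fintype.card Ω := by exact_mod_cast Fintype.card_pos
  rw [div_pow, div_le_div_iff₀ (by positivity) h]
  have := sq_sum_le_card_mul_sum_sq (s := (univ : Finset Ω)) (f := g)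
  rw [card_univ] at this
  nlinarith

lemma aux_resample {ι Ω : Type*} [Fintype ι] [DecidableEq ι] [Fintype Ω] [Nonempty Ω]
    (f : (ι → Ω) → ℝ) (i : ι) :
    𝔼 x, 𝔼 a, f (Function.update x i a) = 𝔼 x, f x := by
  have key : ∑ p : (ι → Ω) × Ω, f (Function.update p.1 i p.2) = ∑ p : (ι → Ω) × Ω, f p.1 := by
    let e : ((ι → Ω) × Ω) → ((ι → Ω) × Ω) := fun p => (Function.update p.1 i p.2, p.1 i)
    have he : Function.Involutive e := by
      rintro ⟨x, a⟩
      simp [e]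
    exact Fintype.sum_equiv he.toPerm _ _ (fun p => rfl)
  rw [Fintype.sum_prod_type, Fintype.sum_prod_type] at key
  simp only [sum_const, card_univ, nsmul_eq_mul] at key
  simp only [Fintype.expect_eq_sum_div_card]
  rw [← Finset.sum_div, key, ← Finset.mul_sum]
  have h : (Fintype.card Ω : ℝ) ≠ 0 := by exact_mod_cast Fintype.card_ne_zero
  field_simp

lemma aux_one_dim {Ω : Type*} [Fintype Ω] [Nonempty Ω] (h : Ω → ℝ) (M v lam : ℝ)
    (hM : ∀ a b, |h a - h b| ≤ M) (hl : |lam| * M ≤ 1)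
    (hv : 𝔼 a, 𝔼 b, (h a - h b) ^ 2 ≤ v) :
    𝔼 a, Real.exp (lam * h a) ≤ Real.exp (lam ^ 2 * v) * Real.exp (lam * 𝔼 a, h a) := by
  set m := 𝔼 a, h a with hm
  have hd : ∀ a, h a - m = 𝔼 b, (h a - h b) := by
    intro a
    rw [expect_sub_distrib, Fintype.expect_const]
  have hd1 : ∀ a, |lam * (h a - m)| ≤ 1 := by
    intro a
    rw [abs_mul]
    refine le_trans (mul_le_mul_of_nonneg_left ?_ (abs_nonneg _)) hl
    rw [hd]
    refine (abs_expect_le _ _).trans ?_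
    exact expect_le univ_nonempty (fun b _ => hM a b)
  have hpt : ∀ a, Real.exp (lam * h a) ≤
      Real.exp (lam * m) * (1 + lam * (h a - m) + lam ^ 2 * 𝔼 b, (h a - h b) ^ 2) := by
    intro a
    have e1 : lam * h a = lam * m + lam * (h a - m) := by ring
    rw [e1, Real.exp_add]
    refine mul_le_mul_of_nonneg_left ?_ (Real.exp_pos _).le
    have := Real.abs_exp_sub_one_sub_id_le (hd1 a)
    have h2 := le_of_abs_le this
    have h3 := aux_sq_expect (fun b => h a - h b)
    rw [← hd] at h3
    have h4 := mul_le_mul_of_nonneg_left h3 (sq_nonneg lam)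
    nlinarith
  calc 𝔼 a, Real.exp (lam * h a)
      ≤ 𝔼 a, Real.exp (lam * m) * (1 + lam * (h a - m) + lam ^ 2 * 𝔼 b, (h a - h b) ^ 2) :=
        expect_le_expect (fun a _ => hpt a)
    _ = Real.exp (lam * m) * (1 + lam ^ 2 * 𝔼 a, 𝔼 b, (h a - h b) ^ 2) := by
        rw [← mul_expect, expect_add_distrib, expect_add_distrib, ← mul_expect, ← mul_expect,
          expect_sub_distrib, Fintype.expect_const, Fintype.expect_const, ← hm]
        ring
    _ ≤ Real.exp (lam * m) * (1 + lam ^ 2 * v) := by gcongr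
    _ ≤ Real.exp (lam * m) * Real.exp (lam ^ 2 * v) := by
        gcongr
        linarith [Real.add_one_le_exp (lam ^ 2 * v)]
    _ = _ := mul_comm _ _

lemma aux_mgf {ι Ω : Type*} [Fintype ι] [DecidableEq ι] [Fintype Ω] [Nonempty Ω]
    (lam M : ℝ) (v : ι → ℝ) (hl : |lam| * M ≤ 1) (S : Finset ι) :
    ∀ f : (ι → Ω) → ℝ, (∀ x y, (∀ i ∈ S, x i = y i) → f x = f y) →
    (∀ i x a b, |f (Function.update x i a) - f (Function.update x i b)| ≤ M) →
    (∀ i x, 𝔼 a, 𝔼 b, (f (Function.update x i a) - f (Function.update x i b)) ^ 2 ≤ v i) →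
    𝔼 x, Real.exp (lam * f x) ≤
      Real.exp (lam ^ 2 * ∑ i ∈ S, v i) * Real.exp (lam * 𝔼 x, f x) := by
  induction S using Finset.induction_on with
  | empty =>
    intro f hdep _ _
    obtain ⟨x0⟩ : Nonempty (ι → Ω) := inferInstance
    have : f = fun _ => f x0 := funext fun x => hdep _ _ (by simp)
    rw [this]
    simp
  | insert i S hi ih =>
    intro f hdep hM hv
    have comm : ∀ (j : ι) (_ : j ≠ i) (x : ι → Ω) (a c : Ω),
        Function.update (Function.update x j a) i c = Function.update (Function.update x i c) j a :=
      fun j hj x a c => Function.update_comm hj a c x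
    have hMn : 0 ≤ M := by
      obtain ⟨x0⟩ : Nonempty (ι → Ω) := inferInstance
      obtain ⟨a⟩ : Nonempty Ω := inferInstance
      exact (abs_nonneg _).trans (hM i x0 a a)
    have hvn : ∀ j, 0 ≤ v j := by
      intro j
      obtain ⟨x0⟩ : Nonempty (ι → Ω) := inferInstance
      refine le_trans ?_ (hv j x0)
      exact expect_nonneg fun a _ => expect_nonneg fun b _ => sq_nonneg _
    have := ih (fun x => 𝔼 c, f (Function.update x i c)) ?_ ?_ ?_
    · rw [aux_resample f i] at this
      rw [sum_insert hi, mul_add, Real.exp_add, mul_assoc]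
      refine le_trans ?_ (mul_le_mul_of_nonneg_left this (Real.exp_pos _).le)
      rw [← aux_resample _ i, mul_expect]
      exact expect_le_expect fun x _ =>
        aux_one_dim (fun c => f (Function.update x i c)) M (v i) lam (hM i x) hl (hv i x)
    · intro x y hxy
      refine expect_congr rfl fun c _ => hdep _ _ fun j hj => ?_
      by_cases hji : j = i
      · subst hji; simp
      · simp [Function.update_of_ne hji, hxy j ((mem_insert.1 hj).resolve_left hji)]
    · intro j x a b
      by_cases hji : j = i
      · subst hji; simpa using hMn
      · rw [← expect_sub_distrib]
        refine (abs_expect_le _ _).trans (expect_le univ_nonempty fun c _ => ?_)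
        rw [comm j hji, comm j hji]
        exact hM _ _ _ _
    · intro j x
      by_cases hji : j = i
      · subst hji; simpa using hvn j
      · calc _ ≤ 𝔼 a, 𝔼 b, 𝔼 c, (f (Function.update (Function.update x i c) j a)
              - f (Function.update (Function.update x i c) j b)) ^ 2 := by
              refine expect_le_expect fun a _ => expect_le_expect fun b _ => ?_
              rw [← expect_sub_distrib]
              refine (aux_sq_expect _).trans (le_of_eq ?_)
              refine expect_congr rfl fun c _ => ?_
              rw [comm j hji, comm j hji]
          _ = 𝔼 c, 𝔼 a, 𝔼 b, (f (Function.update (Function.update x i c) j a)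
              - f (Function.update (Function.update x i c) j b)) ^ 2 := by
              rw [expect_comm]
              refine Eq.trans ?_ (expect_comm _ _ _)
              rw [expect_comm]
              exact expect_congr rfl fun a _ => expect_comm _ _ _
          _ ≤ v j := expect_le univ_nonempty fun c _ => hv _ _

end Abstract
section Tail
open Finset BigOperators Classical

lemma aux_expect_prod {α β : Type*} [Fintype α] [Fintype β] (f : α × β → ℝ) :
    𝔼 p, f p = 𝔼 b, 𝔼 a, f (a, b) := by
  rw [← univ_product_univ, expect_product, expect_comm]

lemma aux_mgf2 {ι κ Ω Ω' : Type*} [Fintype ι] [DecidableEq ι] [Fintype Ω] [Nonempty Ω]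
    [Fintype κ] [DecidableEq κ] [Fintype Ω'] [Nonempty Ω']
    (lam M : ℝ) (v : ι → ℝ) (w : κ → ℝ) (hl : |lam| * M ≤ 1)
    (f : (ι → Ω) × (κ → Ω') → ℝ)
    (h1 : ∀ σ i x a b, |f (Function.update x i a, σ) - f (Function.update x i b, σ)| ≤ M)
    (h2 : ∀ σ i x, 𝔼 a, 𝔼 b, (f (Function.update x i a, σ) - f (Function.update x i b, σ)) ^ 2
      ≤ v i)
    (h3 : ∀ j σ a b, |𝔼 x, f (x, Function.update σ j a) - 𝔼 x, f (x, Function.update σ j b)| ≤ M)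
    (h4 : ∀ j σ a b, (𝔼 x, f (x, Function.update σ j a) - 𝔼 x, f (x, Function.update σ j b)) ^ 2
      ≤ w j) :
    𝔼 p, Real.exp (lam * f p) ≤
      Real.exp (lam ^ 2 * (∑ i, v i + ∑ j, w j)) * Real.exp (lam * 𝔼 p, f p) := by
  rw [aux_expect_prod, aux_expect_prod]
  have s1 : ∀ σ, 𝔼 x, Real.exp (lam * f (x, σ)) ≤
      Real.exp (lam ^ 2 * ∑ i, v i) * Real.exp (lam * 𝔼 x, f (x, σ)) := by
    intro σ
    refine aux_mgf lam M v hl univ (fun x => f (x, σ)) ?_ (h1 σ) (h2 σ)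
    intro x y hxy
    have : x = y := funext fun i => hxy i (mem_univ _)
    rw [this]
  have s2 := aux_mgf lam M w hl univ (fun σ => 𝔼 x, f (x, σ)) ?_ h3 ?_
  · refine (expect_le_expect fun σ _ => s1 σ).trans ?_
    rw [← mul_expect, mul_add, Real.exp_add, mul_assoc]
    exact mul_le_mul_of_nonneg_left s2 (Real.exp_pos _).le
  · intro x y hxy
    have : x = y := funext fun i => hxy i (mem_univ _)
    rw [this]
  · intro i x
    exact expect_le univ_nonempty fun a _ => expect_le univ_nonempty fun b _ => h4 _ _ _ _

lemma aux_tail {ι κ Ω Ω' : Type*} [Fintype ι] [DecidableEq ι] [Fintype Ω] [Nonempty Ω]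
    [Fintype κ] [DecidableEq κ] [Fintype Ω'] [Nonempty Ω']
    (lam M s : ℝ) (v : ι → ℝ) (w : κ → ℝ) (hl0 : 0 ≤ lam) (hl : lam * M ≤ 1)
    (f : (ι → Ω) × (κ → Ω') → ℝ)
    (h1 : ∀ σ i x a b, |f (Function.update x i a, σ) - f (Function.update x i b, σ)| ≤ M)
    (h2 : ∀ σ i x, 𝔼 a, 𝔼 b, (f (Function.update x i a, σ) - f (Function.update x i b, σ)) ^ 2
      ≤ v i)
    (h3 : ∀ j σ a b, |𝔼 x, f (x, Function.update σ j a) - 𝔼 x, f (x, Function.update σ j b)| ≤ M)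
    (h4 : ∀ j σ a b, (𝔼 x, f (x, Function.update σ j a) - 𝔼 x, f (x, Function.update σ j b)) ^ 2
      ≤ w j) :
    𝔼 p, (if s ≤ |f p - 𝔼 q, f q| then (1:ℝ) else 0) ≤
      2 * Real.exp (lam ^ 2 * (∑ i, v i + ∑ j, w j) - lam * s) := by
  set m := 𝔼 q, f q with hm
  have e1 := aux_mgf2 lam M v w (by rwa [abs_of_nonneg hl0]) f h1 h2 h3 h4
  have e2 := aux_mgf2 (-lam) M v w (by rwa [abs_neg, abs_of_nonneg hl0]) f h1 h2 h3 h4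
  rw [← hm] at e1 e2
  set W := ∑ i, v i + ∑ j, w j
  have hpt : ∀ p, (if s ≤ |f p - m| then (1:ℝ) else 0) ≤
      Real.exp (lam * (-m - s)) * Real.exp (lam * f p)
        + Real.exp (lam * (m - s)) * Real.exp (-lam * f p) := by
    intro p
    rw [← Real.exp_add, ← Real.exp_add]
    split_ifs with h
    · rcases le_abs.1 h with h | h
      · have : 1 ≤ Real.exp (lam * (-m - s) + lam * f p) := by
          apply Real.one_le_exp
          nlinarith
        linarith [Real.exp_pos (lam * (m - s) + -lam * f p)]
      · have : 1 ≤ Real.exp (lam * (m - s) + -lam * f p) := by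
          apply Real.one_le_exp
          nlinarith
        linarith [Real.exp_pos (lam * (-m - s) + lam * f p)]
    · positivity
  refine (expect_le_expect fun p _ => hpt p).trans ?_
  rw [expect_add_distrib, ← mul_expect, ← mul_expect]
  have a1 := mul_le_mul_of_nonneg_left e1 (Real.exp_pos (lam * (-m - s))).le
  have a2 := mul_le_mul_of_nonneg_left e2 (Real.exp_pos (lam * (m - s))).le
  rw [← Real.exp_add, ← Real.exp_add] at a1 a2
  have b1 : lam * (-m - s) + (lam ^ 2 * W + lam * m) = lam ^ 2 * W - lam * s := by ring
  have b2 : lam * (m - s) + ((-lam) ^ 2 * W + -lam * m) = lam ^ 2 * W - lam * s := by ring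
  rw [b1] at a1
  rw [b2] at a2
  linarith

lemma aux_prob_eq {α : Type*} [Fintype α] (S : Set α) :
    (S.ncard : ℝ) / (Fintype.card α : ℝ) = 𝔼 p, (if p ∈ S then (1:ℝ) else 0) := by
  rw [Fintype.expect_eq_sum_div_card, Finset.sum_boole, Set.ncard_eq_toFinset_card']
  congr 3
  ext x
  simp only [Set.mem_toFinset, mem_filter, mem_univ, true_and]

lemma aux_prob_same {ι Ω : Type*} [Fintype ι] [DecidableEq ι] [Fintype Ω] [Nonempty Ω]
    (x : ι) (y : ι) (hxy : x ≠ y) :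
    𝔼 f : ι → Ω, (if f x = f y then (1:ℝ) else 0) = 1 / Fintype.card Ω := by
  rw [← aux_resample _ x]
  have : ∀ f : ι → Ω, 𝔼 a, (if Function.update f x a x = Function.update f x a y
      then (1:ℝ) else 0) = 1 / Fintype.card Ω := by
    intro f
    simp [Function.update_of_ne hxy.symm]
  simp only [this]
  exact Fintype.expect_const _

lemma aux_prob_const {ι Ω : Type*} [Fintype ι] [DecidableEq ι] [Fintype Ω] [Nonempty Ω]
    (c : Ω) (S : Finset ι) :
    𝔼 f : ι → Ω, (if ∀ y ∈ S, f y = c then (1:ℝ) else 0) = (1 / Fintype.card Ω) ^ S.card := by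
  induction S using Finset.induction_on with
  | empty => simp
  | insert i S hi ih =>
    rw [← aux_resample _ i, card_insert_of_notMem hi, pow_succ, ← ih, expect_mul]
    refine expect_congr rfl fun f _ => ?_
    have : ∀ a, (if ∀ y ∈ insert i S, Function.update f i a y = c then (1:ℝ) else 0)
        = (if ∀ y ∈ S, f y = c then (1:ℝ) else 0) * (if a = c then 1 else 0) := by
      intro a
      have h2 : (∀ y ∈ insert i S, Function.update f i a y = c) ↔
          (∀ y ∈ S, f y = c) ∧ a = c := by
        rw [forall_mem_insert, Function.update_self, and_comm]
        refine and_congr_left fun _ => forall₂_congr fun y hy => ?_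
        rw [Function.update_of_ne (by rintro rfl; exact hi hy)]
      rw [if_congr h2 rfl rfl]
      by_cases p : ∀ y ∈ S, f y = c
      · by_cases q : a = c
        · rw [if_pos ⟨p, q⟩, if_pos p, if_pos q, mul_one]
        · rw [if_neg (fun h => q h.2), if_neg q, mul_zero]
      · rw [if_neg (fun h => p h.1), if_neg p, zero_mul]
    simp only [this]
    rw [← mul_expect]
    congr 1
    simp

/-- Probability of a large color class. -/
lemma aux_bad {ι : Type*} [Fintype ι] [DecidableEq ι] (C : ℕ) [NeZero C]
    (N : Finset ι) (k : ℕ) :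
    𝔼 f : ι → Fin C, (if ∃ c, k ≤ (N.filter (fun y => f y = c)).card then (1:ℝ) else 0) ≤
      C * (N.card.choose k * (1 / C) ^ k) := by
  have hpt : ∀ f : ι → Fin C,
      (if ∃ c, k ≤ (N.filter (fun y => f y = c)).card then (1:ℝ) else 0) ≤
      ∑ c : Fin C, ∑ S ∈ N.powersetCard k, (if ∀ y ∈ S, f y = c then (1:ℝ) else 0) := by
    intro f
    split_ifs with h
    · obtain ⟨c, hc⟩ := h
      obtain ⟨S, hS, hk⟩ := exists_subset_card_eq hc
      have n1 : ∀ c, 0 ≤ ∑ S ∈ N.powersetCard k, (if ∀ y ∈ S, f y = c then (1:ℝ) else 0) :=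
        fun c => sum_nonneg fun _ _ => by split_ifs <;> norm_num
      refine le_trans ?_ (single_le_sum (fun c _ => n1 c) (mem_univ c))
      have hmem : S ∈ N.powersetCard k :=
        mem_powersetCard.2 ⟨hS.trans (filter_subset _ _), hk⟩
      refine le_trans ?_ (single_le_sum (fun _ _ => by split_ifs <;> norm_num) hmem)
      rw [if_pos fun y hy => (mem_filter.1 (hS hy)).2]
    · exact sum_nonneg fun _ _ => sum_nonneg fun _ _ => by split_ifs <;> norm_num
  refine (expect_le_expect fun f _ => hpt f).trans (le_of_eq ?_)
  rw [expect_sum_comm]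
  have : ∀ c : Fin C, 𝔼 f : ι → Fin C, ∑ S ∈ N.powersetCard k,
      (if ∀ y ∈ S, f y = c then (1:ℝ) else 0) = N.card.choose k * (1 / C) ^ k := by
    intro c
    rw [expect_sum_comm]
    rw [sum_congr rfl (g := fun _ => (1 / (C:ℝ)) ^ k)]
    · rw [sum_const, card_powersetCard, nsmul_eq_mul]
    · intro S hS
      have := aux_prob_const (Ω := Fin C) c S
      rw [Fintype.card_fin, (mem_powersetCard.1 hS).2] at this
      convert this
  rw [sum_congr rfl fun c _ => this c, sum_const, card_univ, Fintype.card_fin, nsmul_eq_mul]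

end Tail
section GraphPart
open Finset BigOperators Classical

variable {V : Type} [Fintype V] [LinearOrder V] (G : SimpleGraph V) [DecidableRel G.Adj]

def auxQ {C : ℕ} (c : Fin C) (ω : ProcSpace G C) (x : V) : Prop :=
  ω.1 x = c ∧ keepsColor G ω x

noncomputable def auxX {C : ℕ} (F : Finset (Finset V)) (c : Fin C) (ω : ProcSpace G C) : ℝ :=
  ((F.filter (fun p => ∀ x ∈ p, auxQ G c ω x)).card : ℝ)

noncomputable def auxF {C : ℕ} (F : Finset (Finset V)) (B : ℝ) (ω : ProcSpace G C) : ℝ :=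
  ∑ c, min (auxX G F c ω) B

lemma auxQ_imp {C : ℕ} {c : Fin C} {ω ω' : ProcSpace G C} {x : V}
    (h1 : ω.1 x = c ↔ ω'.1 x = c)
    (h2 : ω.1 x = c → ∀ w (h : G.Adj x w), (ω.1 w = c ↔ ω'.1 w = c) ∧
      (ω.1 w = c → ω.2 ⟨s(x, w), G.mem_edgeSet.mpr h⟩ = ω'.2 ⟨s(x, w), G.mem_edgeSet.mpr h⟩)) :
    auxQ G c ω x ↔ auxQ G c ω' x := by
  unfold auxQ
  rw [← h1]
  refine and_congr_right fun hx => ?_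
  have hx' := h1.1 hx
  unfold keepsColor pointsTo
  rw [hx, hx']
  refine forall₂_congr fun w h => ?_
  obtain ⟨a, b⟩ := h2 hx w h
  rw [← a]
  exact forall_congr' fun hw => by rw [b hw]

lemma auxX_congr {C : ℕ} {F : Finset (Finset V)} {N : Finset V} (hF : ∀ p ∈ F, p ⊆ N)
    {c : Fin C} {ω ω' : ProcSpace G C} (h : ∀ x ∈ N, auxQ G c ω x ↔ auxQ G c ω' x) :
    auxX G F c ω = auxX G F c ω' := by
  unfold auxX
  congr 2
  refine filter_congr fun p hp => forall₂_congr fun x hx => h x (hF p hp hx)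

lemma auxF_diff {C : ℕ} {F : Finset (Finset V)} {B : ℝ} (hB : 0 ≤ B) {ω ω' : ProcSpace G C}
    (T : Finset (Fin C)) (hT : ∀ c, c ∉ T → auxX G F c ω = auxX G F c ω') :
    |auxF G F B ω - auxF G F B ω'| ≤ T.card * B := by
  unfold auxF
  rw [← sum_sub_distrib]
  refine (abs_sum_le_sum_abs _ _).trans ?_
  rw [← sum_subset (subset_univ T)]
  · rw [← nsmul_eq_mul]
    refine sum_le_card_nsmul _ _ _ fun c _ => ?_
    have e1 : 0 ≤ auxX G F c ω := Nat.cast_nonneg _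
    have e2 : 0 ≤ auxX G F c ω' := Nat.cast_nonneg _
    have f1 := le_min e1 hB
    have f2 := le_min e2 hB
    have g1 := min_le_right (auxX G F c ω) B
    have g2 := min_le_right (auxX G F c ω') B
    rw [abs_le]
    constructor <;> linarith
  · intro c _ hc
    rw [hT c hc, sub_self, abs_zero]

lemma auxX_color {C : ℕ} {F : Finset (Finset V)} {N : Finset V} (hF : ∀ p ∈ F, p ⊆ N)
    {c a b : Fin C} (hca : c ≠ a) (hcb : c ≠ b) (x : V → Fin C) (σ : G.edgeSet → Bool) (w : V) :
    auxX G F c ((Function.update x w a, σ) : ProcSpace G C) =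
      auxX G F c ((Function.update x w b, σ) : ProcSpace G C) := by
  have key : ∀ y, Function.update x w a y = c ↔ Function.update x w b y = c := by
    intro y
    by_cases hy : y = w
    · subst hy
      simp [hca.symm, hcb.symm]
    · simp [Function.update_of_ne hy]
  exact auxX_congr G hF fun y _ => auxQ_imp G (key y) fun _ z _ => ⟨key z, fun _ => rfl⟩

lemma auxX_color2 {C : ℕ} {F : Finset (Finset V)} {N : Finset V} (hF : ∀ p ∈ F, p ⊆ N)
    {c a b : Fin C} (x : V → Fin C) (σ : G.edgeSet → Bool) (w : V) (hw : w ∉ N)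
    (hc : c ∉ (N.filter (fun y => G.Adj w y)).image x) :
    auxX G F c ((Function.update x w a, σ) : ProcSpace G C) =
      auxX G F c ((Function.update x w b, σ) : ProcSpace G C) := by
  refine auxX_congr G hF fun y hy => ?_
  have hyw : y ≠ w := fun h => hw (h ▸ hy)
  refine auxQ_imp G ?_ ?_
  · simp [Function.update_of_ne hyw]
  · intro hyc z hz
    have hzw : z ≠ w := by
      rintro rfl
      refine hc (mem_image.2 ⟨y, mem_filter.2 ⟨hy, hz.symm⟩, ?_⟩)
      simpa [Function.update_of_ne hyw] using hyc
    simp [Function.update_of_ne hzw]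

lemma auxX_edge {C : ℕ} {F : Finset (Finset V)} {N : Finset V} (hF : ∀ p ∈ F, p ⊆ N)
    {c : Fin C} {a b : Bool} (x : V → Fin C) (σ : G.edgeSet → Bool) (e : G.edgeSet)
    (hc : (∀ z ∈ (e : Sym2 V), z ∉ N) ∨ ¬ (∀ z ∈ (e : Sym2 V), x z = c)) :
    auxX G F c ((x, Function.update σ e a) : ProcSpace G C) =
      auxX G F c ((x, Function.update σ e b) : ProcSpace G C) := by
  refine auxX_congr G hF fun y hy => ?_
  refine auxQ_imp G Iff.rfl ?_
  intro hyc z hz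
  refine ⟨Iff.rfl, fun hzc => ?_⟩
  have : (⟨s(y, z), G.mem_edgeSet.mpr hz⟩ : G.edgeSet) ≠ e := by
    rintro rfl
    rcases hc with hc | hc
    · exact hc y (Sym2.mem_mk_left _ _) hy
    · refine hc fun t ht => ?_
      rcases Sym2.mem_iff.1 ht with rfl | rfl
      · exact hyc
      · exact hzc
  simp [Function.update_of_ne this]

lemma auxF_color {C : ℕ} {F : Finset (Finset V)} {N : Finset V} (hF : ∀ p ∈ F, p ⊆ N)
    {B : ℝ} (hB : 0 ≤ B)
    (σ : G.edgeSet → Bool) (w : V) (x : V → Fin C) (a b : Fin C) :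
    |auxF G F B ((Function.update x w a, σ) : ProcSpace G C) -
      auxF G F B ((Function.update x w b, σ) : ProcSpace G C)| ≤ 2 * B := by
  refine (auxF_diff G hB {a, b} fun c hc => ?_).trans ?_
  · simp only [mem_insert, mem_singleton, not_or] at hc
    exact auxX_color G hF hc.1 hc.2 x σ w
  · gcongr
    exact_mod_cast card_le_two

lemma auxF_color_zero {C : ℕ} {F : Finset (Finset V)} {N : Finset V} (hF : ∀ p ∈ F, p ⊆ N)
    {B : ℝ} (hB : 0 ≤ B)
    (σ : G.edgeSet → Bool) (w : V) (hw : w ∉ N) (x : V → Fin C) (a b : Fin C)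
    (ha : a ∉ (N.filter (fun y => G.Adj w y)).image x)
    (hb : b ∉ (N.filter (fun y => G.Adj w y)).image x) :
    auxF G F B ((Function.update x w a, σ) : ProcSpace G C) -
      auxF G F B ((Function.update x w b, σ) : ProcSpace G C) = 0 := by
  have := auxF_diff G (F := F) (ω := (Function.update x w a, σ))
    (ω' := (Function.update x w b, σ)) hB ∅ (fun c _ => ?_)
  · simpa using this
  · by_cases h : c = a
    · subst h; exact auxX_color2 G hF x σ w hw ha
    · by_cases h' : c = b
      · subst h'; exact auxX_color2 G hF x σ w hw hb
      · exact auxX_color G hF h h' x σ w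

lemma auxF_color_sq {C : ℕ} [NeZero C] {F : Finset (Finset V)} {N : Finset V}
    (hF : ∀ p ∈ F, p ⊆ N) {B : ℝ} (hB : 0 ≤ B) (σ : G.edgeSet → Bool) (w : V) (x : V → Fin C) :
    𝔼 a, 𝔼 b, (auxF G F B ((Function.update x w a, σ) : ProcSpace G C) -
      auxF G F B ((Function.update x w b, σ) : ProcSpace G C)) ^ 2 ≤
    (2 * B) ^ 2 * ((if w ∈ N then 1 else 0) + 2 * (N.filter (fun y => G.Adj w y)).card / C) := by
  set I := (N.filter (fun y => G.Adj w y)).image x with hI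
  set d := (N.filter (fun y => G.Adj w y)).card with hd
  have hId : (I.card : ℝ) ≤ d := by exact_mod_cast card_image_le
  have hCpos : (0:ℝ) < C := by exact_mod_cast Nat.pos_of_ne_zero (NeZero.ne C)
  have hsq : ∀ a b, (auxF G F B ((Function.update x w a, σ) : ProcSpace G C) -
      auxF G F B ((Function.update x w b, σ) : ProcSpace G C)) ^ 2 ≤ (2 * B) ^ 2 := fun a b =>
    sq_le_sq' (abs_le.1 (auxF_color G hF hB σ w x a b)).1 (abs_le.1 (auxF_color G hF hB σ w x a b)).2
  by_cases hw : w ∈ N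
  · rw [if_pos hw]
    refine (expect_le univ_nonempty fun a _ => expect_le univ_nonempty fun b _ =>
      hsq a b).trans ?_
    have : (0:ℝ) ≤ 2 * d / C := by positivity
    nlinarith [sq_nonneg (2 * B)]
  · rw [if_neg hw, zero_add]
    have hpt : ∀ a b, (auxF G F B ((Function.update x w a, σ) : ProcSpace G C) -
      auxF G F B ((Function.update x w b, σ) : ProcSpace G C)) ^ 2 ≤
        (2 * B) ^ 2 * ((if a ∈ I then 1 else 0) + (if b ∈ I then 1 else 0)) := by
      intro a b
      by_cases ha : a ∈ I
      · rw [if_pos ha]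
        refine (hsq a b).trans ?_
        have : (0:ℝ) ≤ (if b ∈ I then 1 else 0) := by split_ifs <;> norm_num
        nlinarith [sq_nonneg (2 * B)]
      · by_cases hb : b ∈ I
        · rw [if_pos hb, if_neg ha]
          refine (hsq a b).trans ?_
          simp
        · rw [auxF_color_zero G hF hB σ w hw x a b ha hb]
          simp [ha, hb]
    refine (expect_le_expect fun a _ => expect_le_expect fun b _ => hpt a b).trans ?_
    have hind : 𝔼 a : Fin C, (if a ∈ I then (1:ℝ) else 0) = I.card / C := by
      rw [Fintype.expect_eq_sum_div_card, sum_boole, Fintype.card_fin]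
      simp
    simp only [← mul_expect, expect_add_distrib, Fintype.expect_const, hind]
    gcongr
    rw [← add_div]
    gcongr
    linarith

lemma auxF_edge {C : ℕ} [NeZero C] {F : Finset (Finset V)} {N : Finset V} (hF : ∀ p ∈ F, p ⊆ N)
    {B : ℝ} (hB : 0 ≤ B) (e : G.edgeSet) (σ : G.edgeSet → Bool) (a b : Bool) :
    |𝔼 x : V → Fin C, auxF G F B ((x, Function.update σ e a) : ProcSpace G C) -
      𝔼 x : V → Fin C, auxF G F B ((x, Function.update σ e b) : ProcSpace G C)| ≤
      B / C * (if ∀ z ∈ (e : Sym2 V), z ∉ N then 0 else 1) := by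
  rw [← expect_sub_distrib]
  refine (abs_expect_le _ _).trans ?_
  split_ifs with hN
  · rw [mul_zero]
    refine expect_le univ_nonempty fun x _ => ?_
    have := auxF_diff G (F := F) (ω := (x, Function.update σ e a))
      (ω' := (x, Function.update σ e b)) hB ∅ (fun c _ => auxX_edge G hF x σ e (Or.inl hN))
    simpa using this
  · obtain ⟨e, he⟩ := e
    induction e using Sym2.ind with
    | _ p q =>
      have hpq : p ≠ q := (G.mem_edgeSet.1 he).ne
      have hpt : ∀ x : V → Fin C,
          |auxF G F B ((x, Function.update σ ⟨s(p, q), he⟩ a) : ProcSpace G C) -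
          auxF G F B ((x, Function.update σ ⟨s(p, q), he⟩ b) : ProcSpace G C)| ≤
          B * (if x p = x q then 1 else 0) := by
        intro x
        split_ifs with hx
        · refine (auxF_diff G hB {x p} fun c hc => auxX_edge G hF x σ _ (Or.inr ?_)).trans ?_
          · intro h
            exact hc (mem_singleton.2 (h p (Sym2.mem_mk_left _ _)).symm)
          · simp
        · refine (auxF_diff G hB ∅ fun c hc => auxX_edge G hF x σ _ (Or.inr ?_)).trans ?_
          · intro h
            exact hx ((h p (Sym2.mem_mk_left _ _)).trans (h q (Sym2.mem_mk_right _ _)).symm)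
          · simp
      refine (expect_le_expect fun x _ => hpt x).trans ?_
      rw [← mul_expect]
      have := aux_prob_same (Ω := Fin C) p q hpq
      rw [Fintype.card_fin] at this
      refine le_of_eq ?_
      rw [mul_one, div_eq_mul_one_div, ← this]
      congr 1
      refine expect_congr rfl fun x _ => ?_
      congr

lemma aux_sum_d {r : ℕ} (hG : G.IsRegularOfDegree r) (N : Finset V) :
    ∑ w, ((N.filter (fun y => G.Adj w y)).card : ℝ) = N.card * r := by
  have : ∀ w, ((N.filter (fun y => G.Adj w y)).card : ℝ)
      = ∑ y ∈ N, if G.Adj w y then 1 else 0 := fun w => by rw [sum_boole]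
  simp only [this]
  rw [sum_comm, ← nsmul_eq_mul, ← sum_const]
  refine sum_congr rfl fun y _ => ?_
  rw [sum_boole, ← hG y, ← G.card_neighborFinset_eq_degree]
  congr 2
  ext w
  simp [G.adj_comm]

lemma aux_sum_e {r : ℕ} (hG : G.IsRegularOfDegree r) (N : Finset V) :
    ∑ e : G.edgeSet, (if ∀ z ∈ (e : Sym2 V), z ∉ N then (0:ℝ) else 1) ≤ N.card * r := by
  have : ∀ e : G.edgeSet, (if ∀ z ∈ (e : Sym2 V), z ∉ N then (0:ℝ) else 1)
      ≤ ∑ y ∈ N, if y ∈ (e : Sym2 V) then 1 else 0 := by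
    intro e
    have nn : ∀ y ∈ N, (0:ℝ) ≤ if y ∈ (e : Sym2 V) then 1 else 0 := fun y _ => by
      split_ifs <;> norm_num
    split_ifs with h
    · exact sum_nonneg nn
    · push Not at h
      obtain ⟨z, hz, hzN⟩ := h
      refine le_trans ?_ (single_le_sum nn hzN)
      rw [if_pos hz]
  refine (sum_le_sum fun e _ => this e).trans (le_of_eq ?_)
  rw [sum_comm, ← nsmul_eq_mul, ← sum_const]
  refine sum_congr rfl fun y _ => ?_
  rw [sum_boole, ← hG y, ← G.card_incidenceFinset_eq_degree]
  congr 1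
  refine card_bij (fun e _ => (e : Sym2 V)) ?_ ?_ ?_
  · rintro ⟨e, he⟩ h
    simp only [mem_filter, mem_univ, true_and] at h
    rw [SimpleGraph.mem_incidenceFinset]
    exact ⟨he, h⟩
  · intro a _ b _ h
    exact Subtype.ext h
  · intro e he
    rw [SimpleGraph.mem_incidenceFinset] at he
    exact ⟨⟨e, he.1⟩, by simpa using he.2, rfl⟩

lemma auxF_tail {C r : ℕ} [NeZero C] (hG : G.IsRegularOfDegree r) {F : Finset (Finset V)}
    {N : Finset V} (hF : ∀ p ∈ F, p ⊆ N) (hN : N.card = r) {B : ℝ} (hB : 0 ≤ B)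
    (lam s : ℝ) (hl0 : 0 ≤ lam) (hl : lam * (2 * B) ≤ 1) :
    𝔼 ω : ProcSpace G C, (if s ≤ |auxF G F B ω - 𝔼 ω' : ProcSpace G C, auxF G F B ω'|
      then (1:ℝ) else 0) ≤
      2 * Real.exp (lam ^ 2 * ((2 * B) ^ 2 * (r + 2 * (r * r) / C) + (B / C) ^ 2 * (r * r))
        - lam * s) := by
  have hCpos : (1:ℝ) ≤ C := by exact_mod_cast Nat.pos_of_ne_zero (NeZero.ne C)
  have main := aux_tail lam (2 * B) s
    (fun w => (2 * B) ^ 2 * ((if w ∈ N then 1 else 0)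
      + 2 * (N.filter (fun y => G.Adj w y)).card / C))
    (fun e : G.edgeSet => (B / C) ^ 2 * (if ∀ z ∈ (e : Sym2 V), z ∉ N then (0:ℝ) else 1))
    hl0 hl (fun ω : ProcSpace G C => auxF G F B ω)
    (fun σ w x a b => by convert auxF_color G hF hB σ w x a b)
    (fun σ w x => by convert auxF_color_sq G hF hB σ w x)
    (fun e σ a b => ?_) (fun e σ a b => ?_)
  · refine main.trans ?_
    gcongr
    · rw [← mul_sum, sum_add_distrib, sum_boole, ← sum_div, ← mul_sum, aux_sum_d G hG, hN]
      simp [hN]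
    · rw [← mul_sum]
      gcongr
      have := aux_sum_e G hG N
      rw [hN] at this
      convert this
  · have := auxF_edge (C := C) G hF hB e σ a b
    refine le_trans ?_ (this.trans ?_)
    · convert le_refl _
    · have : B / C ≤ B := div_le_self hB hCpos
      split_ifs <;> linarith
  · have := auxF_edge (C := C) G hF hB e σ a b
    have h0 : (0:ℝ) ≤ B / C := by positivity
    have h2 := sq_le_sq' (by linarith [neg_abs_le (𝔼 x : V → Fin C, auxF G F B ((x, Function.update σ e a) : ProcSpace G C) -
      𝔼 x : V → Fin C, auxF G F B ((x, Function.update σ e b) : ProcSpace G C))]) (le_of_abs_le this)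
    rw [mul_pow] at h2
    refine le_trans ?_ (h2.trans ?_)
    · convert le_refl _
    · split_ifs <;> simp

end GraphPart
section GraphPart2
open Finset BigOperators Classical

variable {V : Type} [Fintype V] [LinearOrder V] (G : SimpleGraph V) [DecidableRel G.Adj]

noncomputable def auxT {C : ℕ} (F : Finset (Finset V)) (ω : ProcSpace G C) : ℝ :=
  ((F.filter (fun p => ∃ c, ∀ x ∈ p, auxQ G c ω x)).card : ℝ)

lemma auxT_eq {C m : ℕ} {F : Finset (Finset V)} {N : Finset V} (hm : 1 ≤ m)
    (hF : F ⊆ N.powersetCard m) (ω : ProcSpace G C) : auxT G F ω = ∑ c, auxX G F c ω := by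
  unfold auxT auxX
  rw [← Nat.cast_sum, ← card_biUnion]
  · congr 2
    ext p
    simp only [mem_filter, mem_biUnion, mem_univ, true_and]
    tauto
  · intro c _ c' _ hcc
    refine disjoint_left.2 fun p hp hp' => hcc ?_
    rw [mem_filter] at hp hp'
    have hc := (mem_powersetCard.1 (hF hp.1)).2
    obtain ⟨x, hx⟩ : p.Nonempty := by
      rw [← card_pos]; omega
    exact (hp.2 x hx).1.symm.trans (hp'.2 x hx).1

lemma auxX_le {C m : ℕ} {F : Finset (Finset V)} {N : Finset V}
    (hF : F ⊆ N.powersetCard m) (c : Fin C) (ω : ProcSpace G C) :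
    auxX G F c ω ≤ ((N.filter (fun y => ω.1 y = c)).card : ℝ) ^ m := by
  unfold auxX
  have h1 : (F.filter (fun p => ∀ x ∈ p, auxQ G c ω x)) ⊆
      (N.filter (fun y => ω.1 y = c)).powersetCard m := by
    intro p hp
    rw [mem_filter] at hp
    obtain ⟨a, b⟩ := mem_powersetCard.1 (hF hp.1)
    exact mem_powersetCard.2 ⟨fun x hx => mem_filter.2 ⟨a hx, (hp.2 x hx).1⟩, b⟩
  have h2 := card_le_card h1
  rw [card_powersetCard] at h2
  exact_mod_cast h2.trans (Nat.choose_le_pow _ _)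

lemma auxT_le {C m : ℕ} {F : Finset (Finset V)} {N : Finset V}
    (hF : F ⊆ N.powersetCard m) (ω : ProcSpace G C) :
    auxT G F ω ≤ (N.card : ℝ) ^ m := by
  unfold auxT
  have h2 := card_le_card ((filter_subset (fun p => ∃ c, ∀ x ∈ p, auxQ G c ω x) F).trans hF)
  rw [card_powersetCard] at h2
  exact_mod_cast h2.trans (Nat.choose_le_pow _ _)

lemma aux_combined {C r m : ℕ} [NeZero C] (hG : G.IsRegularOfDegree r) {F : Finset (Finset V)}
    {N : Finset V} (hm : 1 ≤ m) (hF : F ⊆ N.powersetCard m) (hN : N.card = r)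
    (L lam t : ℝ) (hL : 0 ≤ L) (k : ℕ) (hk : k = ⌊L⌋₊ + 1) (β : ℝ)
    (hβ : C * (r.choose k * (1 / C) ^ k) ≤ β) (hrβ : (r : ℝ) ^ m * β ≤ 1)
    (hl0 : 0 ≤ lam) (hl : lam * (2 * L ^ m) ≤ 1) :
    𝔼 ω : ProcSpace G C, (if t ≤ |auxT G F ω - 𝔼 ω' : ProcSpace G C, auxT G F ω'|
      then (1:ℝ) else 0) ≤ β +
      2 * Real.exp (lam ^ 2 * ((2 * L ^ m) ^ 2 * (r + 2 * (r * r) / C)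
        + (L ^ m / C) ^ 2 * (r * r)) - lam * (t - 1)) := by
  set B := L ^ m with hBdef
  have hB : 0 ≤ B := by positivity
  have tail := auxF_tail (C := C) G hG (F := F) (N := N)
    (fun p hp => (mem_powersetCard.1 (hF hp)).1) hN hB lam (t - 1) hl0 hl
  set bad : ProcSpace G C → ℝ := fun ω =>
    if ∃ c, k ≤ (N.filter (fun y => ω.1 y = c)).card then (1:ℝ) else 0 with hbad
  have bad0 : ∀ ω, 0 ≤ bad ω := fun ω => by
    simp only [hbad]; split_ifs <;> norm_num
  have hbadE : 𝔼 ω, bad ω ≤ β := by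
    have h := (aux_bad C N k)
    rw [hN] at h
    refine le_trans (le_of_eq ?_) (h.trans hβ)
    rw [aux_expect_prod]
    simp only [hbad]
    rw [Fintype.expect_const]
  have Xn : ∀ c (ω : ProcSpace G C), 0 ≤ auxX G F c ω := fun c ω => Nat.cast_nonneg _
  have FT : ∀ ω : ProcSpace G C, auxF G F B ω ≤ auxT G F ω := by
    intro ω
    rw [auxT_eq G hm hF]
    exact sum_le_sum fun c _ => min_le_left _ _
  have F0 : ∀ ω : ProcSpace G C, 0 ≤ auxF G F B ω := fun ω =>
    sum_nonneg fun c _ => le_min (Xn c ω) hB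
  have good : ∀ ω : ProcSpace G C, (¬ ∃ c, k ≤ (N.filter (fun y => ω.1 y = c)).card) →
      auxF G F B ω = auxT G F ω := by
    intro ω h
    push Not at h
    rw [auxT_eq G hm hF]
    refine sum_congr rfl fun c _ => min_eq_left ?_
    refine (auxX_le G hF c ω).trans ?_
    have h1 := h c
    rw [hk, Nat.lt_succ_iff] at h1
    have : ((N.filter (fun y => ω.1 y = c)).card : ℝ) ≤ L :=
      le_trans (by exact_mod_cast h1) (Nat.floor_le hL)
    exact pow_le_pow_left₀ (Nat.cast_nonneg _) this m
  have hE1 : 𝔼 ω, auxF G F B (ω : ProcSpace G C) ≤ 𝔼 ω, auxT G F (ω : ProcSpace G C) :=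
    expect_le_expect fun ω _ => FT ω
  have hE2 : 𝔼 ω, auxT G F (ω : ProcSpace G C) ≤ 𝔼 ω, auxF G F B (ω : ProcSpace G C) + 1 := by
    have : ∀ ω : ProcSpace G C, auxT G F ω ≤ auxF G F B ω + (r:ℝ) ^ m * bad ω := by
      intro ω
      by_cases h : ∃ c, k ≤ (N.filter (fun y => ω.1 y = c)).card
      · have h1 : bad ω = 1 := if_pos h
        have h2 := auxT_le G hF ω
        rw [hN] at h2
        rw [h1]
        linarith [F0 ω]
      · have h1 : bad ω = 0 := if_neg h
        rw [h1, good ω h]; simp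
    refine (expect_le_expect fun ω _ => this ω).trans ?_
    rw [expect_add_distrib, ← mul_expect]
    have := mul_le_mul_of_nonneg_left hbadE (by positivity : (0:ℝ) ≤ (r:ℝ) ^ m)
    linarith
  have hpt : ∀ ω : ProcSpace G C,
      (if t ≤ |auxT G F ω - 𝔼 ω' : ProcSpace G C, auxT G F ω'| then (1:ℝ) else 0) ≤
      bad ω + (if t - 1 ≤ |auxF G F B ω - 𝔼 ω' : ProcSpace G C, auxF G F B ω'|
        then (1:ℝ) else 0) := by
    intro ω
    have nn : (0:ℝ) ≤ (if t - 1 ≤ |auxF G F B ω - 𝔼 ω' : ProcSpace G C, auxF G F B ω'|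
        then (1:ℝ) else 0) := by split_ifs <;> norm_num
    by_cases h : ∃ c, k ≤ (N.filter (fun y => ω.1 y = c)).card
    · have h1 : bad ω = 1 := if_pos h
      rw [h1]
      refine le_trans (b := 1) ?_ (by linarith)
      split_ifs <;> norm_num
    · have h1 : bad ω = 0 := if_neg h
      rw [h1, zero_add, ← good ω h]
      by_cases ht : t ≤ |auxF G F B ω - 𝔼 ω' : ProcSpace G C, auxT G F ω'|
      · rw [if_pos ht, if_pos]
        have := abs_sub_le (auxF G F B ω) (𝔼 ω' : ProcSpace G C, auxF G F B ω')
          (𝔼 ω' : ProcSpace G C, auxT G F ω')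
        have h3 : |𝔼 ω' : ProcSpace G C, auxF G F B ω' - 𝔼 ω' : ProcSpace G C, auxT G F ω'| ≤ 1 := by
          rw [abs_le]; constructor <;> linarith
        linarith
      · rw [if_neg ht]; exact nn
  refine (expect_le_expect fun ω _ => hpt ω).trans ?_
  rw [expect_add_distrib]
  exact add_le_add hbadE tail

end GraphPart2

section Analysis

lemma aux_beta (κ L l : ℝ) (r C k : ℕ) (hr : 1 ≤ r) (hC : 1 ≤ C) (hCr : C ≤ r)
    (hκ : (r:ℝ) / C ≤ κ) (hL : L = Real.log r) (hl : l = Real.log L) (hL1 : 1 ≤ L)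
    (hk : L ≤ k) (h1 : Real.log κ ≤ l) (hκ1 : 1 ≤ κ) :
    C * (r.choose k * (1 / C) ^ k : ℝ) ≤ Real.exp (L * (2 + Real.log κ - l)) := by
  have hr0 : (0:ℝ) < r := by exact_mod_cast hr
  have hC0 : (0:ℝ) < C := by exact_mod_cast hC
  have hL0 : 0 < L := by linarith
  have hκ0 : 0 < κ := by linarith
  have e1 : (r.choose k : ℝ) ≤ r ^ k / k.factorial := Nat.choose_le_pow_div k r
  have e2 : (r.choose k * (1 / C) ^ k : ℝ) ≤ κ ^ k / k.factorial := by
    calc (r.choose k * (1 / C) ^ k : ℝ) ≤ r ^ k / k.factorial * (1 / C) ^ k := by gcongr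
      _ = (r / C) ^ k / k.factorial := by rw [div_pow, div_pow]; field_simp; simp
      _ ≤ _ := by gcongr
  have e3 : L ^ k / k.factorial ≤ Real.exp L := Real.pow_div_factorial_le_exp _ hL0.le k
  have e4 : κ ^ k / k.factorial = (κ / L) ^ k * (L ^ k / k.factorial) := by
    rw [div_pow]; field_simp
  have e5 : κ / L = Real.exp (Real.log κ - l) := by
    rw [Real.exp_sub, Real.exp_log hκ0, hl, Real.exp_log hL0]
  have e6 : (κ / L) ^ k ≤ Real.exp (L * (Real.log κ - l)) := by
    rw [e5, ← Real.exp_nat_mul]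
    apply Real.exp_le_exp.2
    nlinarith
  have e7 : (C:ℝ) ≤ Real.exp L := by
    rw [hL, Real.exp_log hr0]; exact_mod_cast hCr
  calc C * (r.choose k * (1 / C) ^ k : ℝ)
      ≤ Real.exp L * (Real.exp (L * (Real.log κ - l)) * Real.exp L) := by
        refine mul_le_mul e7 (e2.trans ?_) (by positivity) (Real.exp_pos _).le
        rw [e4]
        exact mul_le_mul e6 e3 (by positivity) (Real.exp_pos _).le
    _ = _ := by
        rw [← Real.exp_add, ← Real.exp_add]
        congr 1
        ring

set_option maxHeartbeats 1000000 in
lemma aux_num (κ L l : ℝ) (r C m : ℕ) (hr : 1 ≤ r) (hC : 1 ≤ C)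
    (hκ : (r:ℝ) / C ≤ κ) (hL : L = Real.log r) (hL1 : 1 ≤ L)
    (hκ1 : 1 ≤ κ) (hm : m ≤ 3)
    (h1 : 6 + 2 * Real.log κ ≤ l) (h2 : 4 * (4 + 8 * κ + κ ^ 2) * l + 2 ≤ L)
    (lam : ℝ) (hlam : lam = 2 * l / (Real.sqrt r * L ^ m)) :
    (r:ℝ) ^ m * Real.exp (L * (2 + Real.log κ - l)) ≤ 1 ∧ 0 ≤ lam ∧ lam * (2 * L ^ m) ≤ 1 ∧
    Real.exp (L * (2 + Real.log κ - l)) + 2 * Real.exp (lam ^ 2 * ((2 * L ^ m) ^ 2 *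
      (r + 2 * (r * r) / C) + (L ^ m / C) ^ 2 * (r * r)) - lam * (Real.sqrt r * L ^ (m + 1) - 1))
      ≤ (r:ℝ) ^ (-(1 / 2) * l) := by
  have hr1 : (1:ℝ) ≤ r := by exact_mod_cast hr
  have hr0 : (0:ℝ) < r := by linarith
  have hC0 : (0:ℝ) < C := by exact_mod_cast hC
  have hlogκ : 0 ≤ Real.log κ := Real.log_nonneg hκ1
  have hs0 : 0 < Real.sqrt r := Real.sqrt_pos.2 hr0
  have hL0 : 0 < L := by linarith
  have hrL : (r:ℝ) = Real.exp L := by rw [hL, Real.exp_log hr0]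
  have hLs : L ≤ 2 * Real.sqrt r := by
    have := Real.log_le_sub_one_of_pos hs0
    rw [Real.log_sqrt hr0.le, ← hL] at this
    linarith
  have hls : 8 * l ≤ Real.sqrt r := by nlinarith
  have hBpos : 0 < L ^ m := by positivity
  have hB1 : 1 ≤ L ^ m := one_le_pow₀ hL1
  have hlam0 : 0 ≤ lam := by rw [hlam]; apply div_nonneg <;> nlinarith
  refine ⟨?_, hlam0, ?_, ?_⟩
  · rw [hrL, ← Real.exp_nat_mul, ← Real.exp_add]
    apply Real.exp_le_one_iff.2
    have : (m:ℝ) ≤ 3 := by exact_mod_cast hm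
    nlinarith
  · rw [hlam]
    have : 2 * l / (Real.sqrt r * L ^ m) * (2 * L ^ m) = 4 * l / Real.sqrt r := by
      field_simp; ring
    rw [this, div_le_one hs0]
    linarith
  · have hhalf : (r:ℝ) ^ (-(1 / 2) * l) = Real.exp (-(1/2) * L * l) := by
      rw [Real.rpow_def_of_pos hr0, ← hL]; congr 1; ring
    rw [hhalf]
    have hlog2 : Real.log 2 ≤ 1 := by linarith [Real.log_two_lt_d9]
    have two_e : (2:ℝ) ≤ Real.exp 1 := by linarith [Real.add_one_le_exp (1:ℝ)]
    have p1 : 2 * Real.exp (L * (2 + Real.log κ - l)) ≤ Real.exp (-(1/2) * L * l) := by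
      calc 2 * Real.exp (L * (2 + Real.log κ - l))
          ≤ Real.exp 1 * Real.exp (L * (2 + Real.log κ - l)) := by gcongr
        _ = Real.exp (1 + L * (2 + Real.log κ - l)) := by rw [← Real.exp_add]
        _ ≤ _ := by
          apply Real.exp_le_exp.2
          nlinarith
    have q1 : lam ^ 2 * ((2 * L ^ m) ^ 2 *
      (r + 2 * (r * r) / C) + (L ^ m / C) ^ 2 * (r * r)) ≤ 4 * (4 + 8 * κ + κ ^ 2) * l ^ 2 := by
      have sq : Real.sqrt r ^ 2 = r := Real.sq_sqrt hr0.le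
      have : lam ^ 2 * ((2 * L ^ m) ^ 2 *
        (r + 2 * (r * r) / C) + (L ^ m / C) ^ 2 * (r * r)) =
        4 * l ^ 2 * (4 + 8 * (r / C) + (r / C) ^ 2 / r) := by
        rw [hlam, div_pow, mul_pow, mul_pow, sq]
        field_simp
        ring
      rw [this]
      have n0 : (0:ℝ) ≤ r / C := by positivity
      have t1 : (r / C : ℝ) ^ 2 / r ≤ κ ^ 2 :=
        (div_le_self (by positivity) hr1).trans (by gcongr)
      have : 4 + 8 * (r / C : ℝ) + (r / C) ^ 2 / r ≤ 4 + 8 * κ + κ ^ 2 := by linarith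
      nlinarith [mul_le_mul_of_nonneg_left this (by positivity : 0 ≤ 4 * l ^ 2)]
    have q2 : 2 * l * L - l ≤ lam * (Real.sqrt r * L ^ (m + 1) - 1) := by
      have a1 : lam * (Real.sqrt r * L ^ (m + 1)) = 2 * l * L := by
        rw [hlam, pow_succ]; field_simp
      have a2 : lam ≤ l := by
        rw [hlam, div_le_iff₀ (by positivity)]
        have : 2 ≤ Real.sqrt r * L ^ m := by nlinarith
        nlinarith
      rw [mul_sub, a1, mul_one]
      linarith
    have p2 : 2 * (2 * Real.exp (lam ^ 2 * ((2 * L ^ m) ^ 2 *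
      (r + 2 * (r * r) / C) + (L ^ m / C) ^ 2 * (r * r))
        - lam * (Real.sqrt r * L ^ (m + 1) - 1))) ≤ Real.exp (-(1/2) * L * l) := by
      set Z := lam ^ 2 * ((2 * L ^ m) ^ 2 *
        (r + 2 * (r * r) / C) + (L ^ m / C) ^ 2 * (r * r))
        - lam * (Real.sqrt r * L ^ (m + 1) - 1) with hZ
      have hZle : Z ≤ 4 * (4 + 8 * κ + κ ^ 2) * l ^ 2 - (2 * l * L - l) := by linarith
      calc 2 * (2 * Real.exp Z) ≤ Real.exp 1 * (Real.exp 1 * Real.exp Z) := by gcongr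
        _ = Real.exp (1 + (1 + Z)) := by rw [← Real.exp_add, ← Real.exp_add]
        _ ≤ _ := by
          apply Real.exp_le_exp.2
          have : (4 * (4 + 8 * κ + κ ^ 2) * l + 2) * l ≤ L * l :=
            mul_le_mul_of_nonneg_right h2 (by linarith)
          have e1 : (4 * (4 + 8 * κ + κ ^ 2) * l + 2) * l
            = 4 * (4 + 8 * κ + κ ^ 2) * l ^ 2 + 2 * l := by ring
          rw [e1] at this
          have hLl : 0 ≤ L * l := mul_nonneg hL0.le (by linarith)
          have e2 : 2 * l * L = 2 * (L * l) := by ring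
          have e3 : -(1/2) * L * l = -(1/2) * (L * l) := by ring
          rw [e2] at hZle
          rw [e3]
          linarith
    linarith

end Analysis
section Final
open Finset BigOperators Classical

noncomputable def auxFam {V : Type} [Fintype V] [LinearOrder V] (G : SimpleGraph V)
    [DecidableRel G.Adj] (u : V) (m : ℕ) : Finset (Finset V) :=
  ((G.neighborFinset u).powersetCard m).filter (fun p => ∀ x ∈ p, ∀ y ∈ p, ¬ G.Adj x y)

lemma aux_pairs {V : Type} [Fintype V] [LinearOrder V] (G : SimpleGraph V)
    [DecidableRel G.Adj] (u : V) {C : ℕ} (ω : ProcSpace G C) :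
    (pairsSaved G u ω : ℝ) = auxT G (auxFam G u 2) ω := by
  unfold pairsSaved auxT
  rw [← Set.ncard_coe_finset]
  refine congrArg (fun S : Set (Finset V) => (S.ncard : ℝ)) (Set.ext fun p => ?_)
  rw [mem_coe, mem_filter, auxFam, mem_filter, mem_powersetCard]
  simp only [Set.mem_ofPred_eq, auxQ]
  constructor
  · rintro ⟨x, y, hxy, rfl, hux, huy, hn, hc, kx, ky⟩
    refine ⟨⟨⟨?_, card_pair hxy⟩, ?_⟩, ω.1 y, ?_⟩
    · intro z hz
      simp only [mem_insert, mem_singleton] at hz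
      rcases hz with rfl | rfl <;> simpa
    · simp [hn, G.adj_comm y x]
    · simp [hc, kx, ky]
  · rintro ⟨⟨⟨hs, hcard⟩, hn⟩, c, hc⟩
    obtain ⟨x, y, hxy, rfl⟩ := card_eq_two.1 hcard
    have hx : x ∈ ({x, y} : Finset V) := by simp
    have hy : y ∈ ({x, y} : Finset V) := by simp
    exact ⟨x, y, hxy, rfl, by simpa using hs hx, by simpa using hs hy, hn x hx y hy,
      (hc x hx).1.trans (hc y hy).1.symm, (hc x hx).2, (hc y hy).2⟩

lemma aux_triples {V : Type} [Fintype V] [LinearOrder V] (G : SimpleGraph V)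
    [DecidableRel G.Adj] (u : V) {C : ℕ} (ω : ProcSpace G C) :
    (triplesSaved G u ω : ℝ) = auxT G (auxFam G u 3) ω := by
  unfold triplesSaved auxT
  rw [← Set.ncard_coe_finset]
  refine congrArg (fun S : Set (Finset V) => (S.ncard : ℝ)) (Set.ext fun p => ?_)
  rw [mem_coe, mem_filter, auxFam, mem_filter, mem_powersetCard]
  simp only [Set.mem_ofPred_eq, auxQ]
  constructor
  · rintro ⟨x, y, z, hxy, hxz, hyz, rfl, hux, huy, huz, n1, n2, n3, c1, c2, kx, ky, kz⟩
    refine ⟨⟨⟨?_, card_eq_three.2 ⟨x, y, z, hxy, hxz, hyz, rfl⟩⟩, ?_⟩, ω.1 z, ?_⟩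
    · intro t ht
      simp only [mem_insert, mem_singleton] at ht
      rcases ht with rfl | rfl | rfl <;> simpa
    · simp [n1, n2, n3, G.adj_comm y x, G.adj_comm z x, G.adj_comm z y]
    · simp [c1, c2, kx, ky, kz]
  · rintro ⟨⟨⟨hs, hcard⟩, hn⟩, c, hc⟩
    obtain ⟨x, y, z, hxy, hxz, hyz, rfl⟩ := card_eq_three.1 hcard
    have hx : x ∈ ({x, y, z} : Finset V) := by simp
    have hy : y ∈ ({x, y, z} : Finset V) := by simp
    have hz : z ∈ ({x, y, z} : Finset V) := by simp
    exact ⟨x, y, z, hxy, hxz, hyz, rfl, by simpa using hs hx, by simpa using hs hy,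
      by simpa using hs hz, hn x hx y hy, hn x hx z hz, hn y hy z hz,
      (hc x hx).1.trans (hc y hy).1.symm, (hc y hy).1.trans (hc z hz).1.symm,
      (hc x hx).2, (hc y hy).2, (hc z hz).2⟩

lemma aux_final (γ : ℝ) (hγ : γ ∈ Set.Ioo (0 : ℝ) 1) :
    ∃ R : ℕ, ∀ r : ℕ, R ≤ r →
      ∀ (V : Type) [Fintype V] [LinearOrder V] (G : SimpleGraph V) [DecidableRel G.Adj],
        G.IsRegularOfDegree r → ∀ u : V, ∀ m : ℕ, 1 ≤ m → m ≤ 3 →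
        procProb G ⌈(1 - γ) * (r : ℝ)⌉₊
            {ω | Real.sqrt r * Real.log r ^ (m + 1) ≤
              |auxT G (auxFam G u m) ω -
                procExp G ⌈(1 - γ) * (r : ℝ)⌉₊ (fun ω' => auxT G (auxFam G u m) ω')|} ≤
          (r : ℝ) ^ (-(1 / 2) * Real.log (Real.log r)) := by
  obtain ⟨hγ0, hγ1⟩ := hγ
  set κ : ℝ := 1 / (1 - γ) with hκdef
  have hpos : 0 < 1 - γ := by linarith
  have hκ1 : 1 ≤ κ := by rw [hκdef, le_div_iff₀ hpos]; linarith
  have tL : Filter.Tendsto (fun r : ℕ => Real.log r) Filter.atTop Filter.atTop :=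
    Real.tendsto_log_atTop.comp tendsto_natCast_atTop_atTop
  have tl : Filter.Tendsto (fun r : ℕ => Real.log (Real.log r)) Filter.atTop Filter.atTop :=
    Real.tendsto_log_atTop.comp tL
  set A : ℝ := 4 * (4 + 8 * κ + κ ^ 2) with hA
  have hApos : 0 < A := by positivity
  have o1 : ∀ᶠ x : ℝ in Filter.atTop, A * Real.log x + 2 ≤ x := by
    have h := Real.isLittleO_log_id_atTop.bound (c := 1 / (2 * A)) (by positivity)
    filter_upwards [h, Filter.eventually_ge_atTop (4:ℝ)] with x hx hx4
    simp only [id, Real.norm_eq_abs] at hx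
    rw [abs_of_pos (by linarith : 0 < x)] at hx
    have h1 := mul_le_mul_of_nonneg_left ((le_abs_self _).trans hx) hApos.le
    have h2 : A * (1 / (2 * A) * x) = x / 2 := by field_simp
    rw [h2] at h1
    linarith
  have hev : ∀ᶠ r : ℕ in Filter.atTop, 1 ≤ r ∧ 1 ≤ Real.log r ∧
      6 + 2 * Real.log κ ≤ Real.log (Real.log r) ∧
      A * Real.log (Real.log r) + 2 ≤ Real.log r := by
    filter_upwards [Filter.eventually_ge_atTop 1, tL.eventually_ge_atTop 1,
      tl.eventually_ge_atTop (6 + 2 * Real.log κ), tL.eventually o1] with r a b c d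
    exact ⟨a, b, c, d⟩
  obtain ⟨R, hR⟩ := Filter.eventually_atTop.1 hev
  refine ⟨R, fun r hr V _ _ G _ hG u m hm1 hm3 => ?_⟩
  obtain ⟨r1, hL1, h1, h2⟩ := hR r hr
  have hr0 : (0:ℝ) < r := by exact_mod_cast r1
  set C := ⌈(1 - γ) * (r : ℝ)⌉₊ with hCdef
  have hC1 : 1 ≤ C := Nat.ceil_pos.2 (by positivity)
  have hCr : C ≤ r := Nat.ceil_le.2 (by nlinarith)
  have hCge : (1 - γ) * r ≤ C := Nat.le_ceil _
  have hC0 : (0:ℝ) < C := by exact_mod_cast hC1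
  have hκ : (r:ℝ) / C ≤ κ := by
    rw [hκdef, div_le_div_iff₀ hC0 hpos]; linarith
  have : NeZero C := ⟨by omega⟩
  have hlogκ : 0 ≤ Real.log κ := Real.log_nonneg hκ1
  obtain ⟨n1, n2, n3, n4⟩ := aux_num κ (Real.log r) (Real.log (Real.log r)) r C m r1 hC1 hκ rfl
    hL1 hκ1 hm3 h1 h2 _ rfl
  have hb := aux_beta κ (Real.log r) (Real.log (Real.log r)) r C (⌊Real.log r⌋₊ + 1) r1 hC1 hCr hκ
    rfl rfl hL1 (by push_cast; exact (Nat.lt_floor_add_one _).le) (by linarith) hκ1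
  have main := aux_combined (C := C) G hG (F := auxFam G u m) (N := G.neighborFinset u) hm1
    (filter_subset _ _) ((G.card_neighborFinset_eq_degree u).trans (hG u)) (Real.log r) _
    (Real.sqrt r * Real.log r ^ (m + 1)) (by linarith) _ rfl _ hb n1 n2 n3
  refine le_trans (le_of_eq ?_) (main.trans n4)
  unfold procProb procExp
  rw [aux_prob_eq]
  simp only [Set.mem_ofPred_eq, Fintype.expect_eq_sum_div_card]

end Final

/-- Concentration of `P_u` and `T_u`: for every `γ ∈ (0,1)` there is an `R` such that
for every `r`-regular graph `G` with `r ≥ R` and every vertex `u`, when the random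
coloring procedure is performed with `⌈(1−γ)r⌉` colors,
`P[|P_u − E[P_u]| ≥ √r·(log r)³] ≤ r^{−(1/2)·log log r}` and
`P[|T_u − E[T_u]| ≥ √r·(log r)⁴] ≤ r^{−(1/2)·log log r}`. -/
theorem concentration_Pu_Tu (γ : ℝ) (hγ : γ ∈ Set.Ioo (0 : ℝ) 1) :
    ∃ R : ℕ, ∀ r : ℕ, R ≤ r →
      ∀ (V : Type) [Fintype V] [LinearOrder V] (G : SimpleGraph V) [DecidableRel G.Adj],
        G.IsRegularOfDegree r → ∀ u : V,
        procProb G ⌈(1 - γ) * (r : ℝ)⌉₊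
            {ω | Real.sqrt r * Real.log r ^ 3 ≤
              |(pairsSaved G u ω : ℝ) -
                procExp G ⌈(1 - γ) * (r : ℝ)⌉₊ (fun ω' => (pairsSaved G u ω' : ℝ))|} ≤
          (r : ℝ) ^ (-(1 / 2) * Real.log (Real.log r)) ∧
        procProb G ⌈(1 - γ) * (r : ℝ)⌉₊
            {ω | Real.sqrt r * Real.log r ^ 4 ≤
              |(triplesSaved G u ω : ℝ) -
                procExp G ⌈(1 - γ) * (r : ℝ)⌉₊ (fun ω' => (triplesSaved G u ω' : ℝ))|} ≤
          (r : ℝ) ^ (-(1 / 2) * Real.log (Real.log r)) := by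

  obtain ⟨R, hR⟩ := aux_final γ hγ
  refine ⟨R, fun r hr V _ _ G _ hG u => ⟨?_, ?_⟩⟩
  · simp only [aux_pairs]
    exact hR r hr V G hG u 2 (by norm_num) (by norm_num)
  · simp only [aux_triples]
    exact hR r hr V G hG u 3 (by norm_num) (by norm_num)
end
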